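/- arXiv:1801.08056 — 2 statements merged into one kernel-verified Lean document; each statement's English description precedes it below -/
import Mathlib

section
/- Let D be the derivation of ℚ[u,v,w] with D(u)=uvw, D(v)=2uw, D(w)=uw. For every n ≥ 1, D^n(w) = Σ_{i=1}^{n} Σ_{j=0}^{n−1} γ_{n,i,j} · u^i v^j w^{2n+1−2i−j}, an identity in ℚ[u,v,w], where γ_{n,i,j} is the number of σ ∈ Q_n with lap(σ) = i, dasc(σ) = j and dp(σ) = 0. -/
open Finset MvPolynomial

/-- Stirling permutations of order `n`, encoded as functions `Fin (2*n) → Fin (n+1)`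
in one-line notation (position `i` holds the letter `σ (i) ∈ {1,…,n}`), such that each
letter `1,…,n` occurs exactly twice and all entries between the two occurrences of a
letter are larger than that letter. -/
def StirlingSet (n : ℕ) : Finset (Fin (2*n) → Fin (n+1)) :=
  Finset.univ.filter (fun σ =>
    (∀ v : Fin (n+1), (v : ℕ) ≠ 0 →
        (Finset.univ.filter (fun i => σ i = v)).card = 2) ∧
    (∀ i j k : Fin (2*n), i < j → j < k → σ i = σ k → σ i < σ j))

/-- The letter at position `i ∈ {1,…,2n}` of a Stirling permutation, with the
convention that positions outside this range (in particular position `0`) hold `0`. -/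
def sval {n : ℕ} (σ : Fin (2*n) → Fin (n+1)) (i : ℕ) : ℕ :=
  if h : 1 ≤ i ∧ i ≤ 2*n then (σ ⟨i - 1, by omega⟩ : ℕ) else 0

/-- The number of ascent-plateaus: indices `2 ≤ i ≤ 2n-1` with `σ_{i-1} < σ_i = σ_{i+1}`. -/
def apQ {n : ℕ} (σ : Fin (2*n) → Fin (n+1)) : ℕ :=
  ((Finset.Icc 2 (2*n - 1)).filter
    (fun i => sval σ (i-1) < sval σ i ∧ sval σ i = sval σ (i+1))).card

/-- The number of left ascent-plateaus: indices `1 ≤ i ≤ 2n-1` with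
`σ_{i-1} < σ_i = σ_{i+1}`, where `σ_0 = 0`. -/
def lapQ {n : ℕ} (σ : Fin (2*n) → Fin (n+1)) : ℕ :=
  ((Finset.Icc 1 (2*n - 1)).filter
    (fun i => sval σ (i-1) < sval σ i ∧ sval σ i = sval σ (i+1))).card

/-- The number of double ascents: indices `1 ≤ i ≤ 2n-1` with
`σ_{i-1} < σ_i < σ_{i+1}`, where `σ_0 = 0`. -/
def dascQ {n : ℕ} (σ : Fin (2*n) → Fin (n+1)) : ℕ :=
  ((Finset.Icc 1 (2*n - 1)).filter
    (fun i => sval σ (i-1) < sval σ i ∧ sval σ i < sval σ (i+1))).card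

/-- The number of descent-plateaus: indices `2 ≤ i ≤ 2n-1` with
`σ_{i-1} > σ_i = σ_{i+1}`. -/
def dpQ {n : ℕ} (σ : Fin (2*n) → Fin (n+1)) : ℕ :=
  ((Finset.Icc 2 (2*n - 1)).filter
    (fun i => sval σ i < sval σ (i-1) ∧ sval σ i = sval σ (i+1))).card

/-- The number of ascents: indices `1 ≤ i ≤ 2n-1` with `σ_i < σ_{i+1}` or `i = 1`. -/
def ascQ {n : ℕ} (σ : Fin (2*n) → Fin (n+1)) : ℕ :=
  ((Finset.Icc 1 (2*n - 1)).filter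
    (fun i => sval σ i < sval σ (i+1) ∨ i = 1)).card

/-- The number of plateaus: indices `1 ≤ i ≤ 2n-1` with `σ_i = σ_{i+1}`. -/
def platQ {n : ℕ} (σ : Fin (2*n) → Fin (n+1)) : ℕ :=
  ((Finset.Icc 1 (2*n - 1)).filter (fun i => sval σ i = sval σ (i+1))).card

/-- The flag ascent-plateau number: `2·ap(σ)+1` if `σ_1 = σ_2`, and `2·ap(σ)` otherwise. -/
def fapQ {n : ℕ} (σ : Fin (2*n) → Fin (n+1)) : ℕ :=
  if 1 ≤ n ∧ sval σ 1 = sval σ 2 then 2 * apQ σ + 1 else 2 * apQ σ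

/-- `γ_{n,i,j}`: the number of Stirling permutations of order `n` with `lap = i`,
`dasc = j` and `dp = 0`. -/
def gammaNum (n i j : ℕ) : ℕ :=
  ((StirlingSet n).filter (fun σ => lapQ σ = i ∧ dascQ σ = j ∧ dpQ σ = 0)).card

section PowersetLeibniz

variable {R A : Type*} [CommSemiring R] [CommSemiring A] [Algebra R A]

theorem Derivation.iterate_mul_powerset {α : Type*} [DecidableEq α] (D : Derivation R A A)
    (f g : A) (S : Finset α) :
    D^[S.card] (f * g) = ∑ T ∈ S.powerset, D^[T.card] f * D^[(S \ T).card] g := by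
  induction S using Finset.induction_on with
  | empty => simp
  | insert a S ha ih =>
    rw [sum_powerset_insert ha, card_insert_of_notMem ha, Function.iterate_succ_apply', ih,
      map_sum, ← sum_add_distrib]
    refine sum_congr rfl fun T hT => ?_
    have haT : a ∉ T := fun h => ha (mem_powerset.1 hT h)
    rw [insert_sdiff_of_notMem _ haT, card_insert_of_notMem (by simp [ha]),
      card_insert_of_notMem haT, Derivation.leibniz, Function.iterate_succ_apply',
      Function.iterate_succ_apply', insert_sdiff_insert, sdiff_insert_of_notMem ha]
    simp only [smul_eq_mul]
    ring

end PowersetLeibniz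

/-- Words in which every letter of `S` occurs exactly twice, no other letter occurs, and all
letters between the two occurrences of a letter are larger than it. -/
noncomputable def stirlingWords (S : Finset ℕ) : Finset (List ℕ) :=
  open Classical in
  (S.toList ++ S.toList).permutations.toFinset.filter
    (fun l => ∀ a b, [a, b, a].Sublist l → a < b)

theorem mem_stirlingWords {S : Finset ℕ} {l : List ℕ} :
    l ∈ stirlingWords S ↔ (∀ a, l.count a = if a ∈ S then 2 else 0) ∧
      ∀ a b, [a, b, a].Sublist l → a < b := by
  simp only [stirlingWords, mem_filter, List.mem_toFinset, List.mem_permutations,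
    List.perm_iff_count, List.count_append]
  refine and_congr_left fun _ => forall_congr' fun a => ?_
  by_cases ha : a ∈ S
  · rw [List.count_eq_one_of_mem S.nodup_toList (by simpa using ha)]; simp [ha]
  · rw [List.count_eq_zero_of_not_mem (l := S.toList) (by simpa using ha)]; simp [ha]

theorem mem_of_mem_stirlingWords {S : Finset ℕ} {l : List ℕ} (hl : l ∈ stirlingWords S) {a : ℕ} :
    a ∈ l ↔ a ∈ S := by
  rw [← List.count_pos_iff, (mem_stirlingWords.1 hl).1]
  split_ifs with h <;> simp [h]

theorem toFinset_of_mem_stirlingWords {S : Finset ℕ} {l : List ℕ} (hl : l ∈ stirlingWords S) :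
    l.toFinset = S := by
  ext a
  rw [List.mem_toFinset, mem_of_mem_stirlingWords hl]

theorem eq_nil_iff_of_mem_stirlingWords {S : Finset ℕ} {l : List ℕ} (hl : l ∈ stirlingWords S) :
    l = [] ↔ S = ∅ := by
  rw [← toFinset_of_mem_stirlingWords hl, List.toFinset_eq_empty_iff]

theorem length_of_mem_stirlingWords {S : Finset ℕ} {l : List ℕ} (hl : l ∈ stirlingWords S) :
    l.length = 2 * S.card := by
  simp only [stirlingWords, mem_filter, List.mem_toFinset, List.mem_permutations] at hl
  rw [hl.1.length_eq, List.length_append, length_toList, two_mul]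

theorem stirlingWords_empty : stirlingWords ∅ = {[]} := by
  ext l
  rw [mem_singleton]
  refine ⟨fun hl => (eq_nil_iff_of_mem_stirlingWords hl).2 rfl, ?_⟩
  rintro rfl
  simp [mem_stirlingWords]

theorem sublist_left_of_not_mem_right {α : Type*} {a b : α} {P Q : List α}
    (h : [a, b, a].Sublist (P ++ Q)) (ha : a ∉ Q) : [a, b, a].Sublist P := by
  obtain ⟨l₁, l₂, h12, h1, h2⟩ := List.sublist_append_iff.1 h
  rcases List.eq_nil_or_concat l₂ with rfl | ⟨l, x, rfl⟩
  · simpa [h12] using h1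
  · have hx : a = x := by simpa using congrArg List.getLast? h12
    exact absurd (h2.subset (by simp [hx])) ha

theorem sublist_right_of_not_mem_left {α : Type*} {a b : α} {P Q : List α}
    (h : [a, b, a].Sublist (P ++ Q)) (ha : a ∉ P) : [a, b, a].Sublist Q := by
  obtain ⟨l₁, l₂, h12, h1, h2⟩ := List.sublist_append_iff.1 h
  cases l₁ with
  | nil => simpa [h12] using h2
  | cons x l =>
    have hx : a = x := by simpa using congrArg List.head? h12
    exact absurd (h1.subset (by simp [hx])) ha

theorem triple_sublist {α : Type*} {a b : α} {P Q : List α} (hP : a ∈ P) (hQ : a ∈ Q) :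
    [a, b, a].Sublist (P ++ b :: Q) := by
  simpa using (List.singleton_sublist.2 hP).append ((List.singleton_sublist.2 hQ).cons_cons b)

theorem node_mem_stirlingWords {S T V : Finset ℕ} {m : ℕ} (hm : ∀ a ∈ S, m < a) (hT : T ⊆ S)
    (hV : V ⊆ T) {A B C : List ℕ} (hA : A ∈ stirlingWords V) (hB : B ∈ stirlingWords (T \ V))
    (hC : C ∈ stirlingWords (S \ T)) :
    A ++ m :: (B ++ m :: C) ∈ stirlingWords (insert m S) := by
  have hmA (a : ℕ) := mem_of_mem_stirlingWords hA (a := a)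
  have hmB (a : ℕ) := mem_of_mem_stirlingWords hB (a := a)
  have hmC (a : ℕ) := mem_of_mem_stirlingWords hC (a := a)
  rw [mem_stirlingWords] at *
  obtain ⟨cA, sA⟩ := hA
  obtain ⟨cB, sB⟩ := hB
  obtain ⟨cC, sC⟩ := hC
  have hmS : m ∉ S := fun h => lt_irrefl _ (hm m h)
  refine ⟨fun a => ?_, fun a b hab => ?_⟩
  · have h1 : a ∈ V → a ∈ T := @hV a
    have h2 : a ∈ T → a ∈ S := @hT a
    simp only [List.count_append, List.count_cons, cA, cB, cC, mem_sdiff, mem_insert, beq_iff_eq]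
    grind
  · have ha : a ∈ A ++ m :: (B ++ m :: C) := hab.subset (by simp)
    have hb : b ∈ A ++ m :: (B ++ m :: C) := hab.subset (by simp)
    by_cases ham : a = m
    · subst ham
      by_cases hba : b = a
      · subst hba
        have h3 := hab.count_le b
        simp only [List.count_append, List.count_cons, cA, cB, cC, mem_sdiff] at h3
        grind
      · refine hm b ?_
        grind
    · by_cases haA : a ∈ V
      · exact sA a b (sublist_left_of_not_mem_right hab (by grind))
      · have h1 := sublist_right_of_not_mem_left
          (P := A ++ [m]) (Q := B ++ m :: C) (by simpa using hab) (by grind)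
        by_cases haB : a ∈ T
        · exact sB a b (sublist_left_of_not_mem_right h1 (by grind))
        · exact sC a b (sublist_right_of_not_mem_left
            (P := B ++ [m]) (by simpa using h1) (by grind))

theorem exists_node_of_mem_stirlingWords {S : Finset ℕ} {m : ℕ} (hm : ∀ a ∈ S, m < a) {l : List ℕ}
    (hl : l ∈ stirlingWords (insert m S)) :
    ∃ T ⊆ S, ∃ V ⊆ T, ∃ A ∈ stirlingWords V, ∃ B ∈ stirlingWords (T \ V),
      ∃ C ∈ stirlingWords (S \ T), A ++ m :: (B ++ m :: C) = l := by
  have hmS : m ∉ S := fun h => lt_irrefl _ (hm m h)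
  have hml : m ∈ l := (mem_of_mem_stirlingWords hl).2 (mem_insert_self _ _)
  obtain ⟨A, l', rfl, hmA⟩ := List.eq_append_cons_of_mem hml
  have hcm := (mem_stirlingWords.1 hl).1 m
  have hml' : m ∈ l' := by
    rw [← List.count_pos_iff]
    simp [List.count_eq_zero_of_not_mem hmA] at hcm
    omega
  obtain ⟨B, C, rfl, hmB⟩ := List.eq_append_cons_of_mem hml'
  have hmC : m ∉ C := by
    rw [← List.count_eq_zero]
    simp [List.count_eq_zero_of_not_mem hmA, List.count_eq_zero_of_not_mem hmB] at hcm
    omega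
  have hnest := (mem_stirlingWords.1 hl).2
  have hcount := (mem_stirlingWords.1 hl).1
  have hmem (a : ℕ) : a ∈ A ∨ a = m ∨ a ∈ B ∨ a = m ∨ a ∈ C ↔ a = m ∨ a ∈ S := by
    simpa using mem_of_mem_stirlingWords hl (a := a)
  have hAB : ∀ a ∈ A, a ∉ B ++ m :: C := fun a hA hBC => by
    have h1 := hnest a m (triple_sublist hA hBC)
    have h2 := (hmem a).1 (Or.inl hA)
    exact absurd h1 (h2.elim (fun h => h ▸ lt_irrefl _) (fun h => (hm a h).asymm))
  have hBC : ∀ a ∈ B, a ∉ C := fun a hB hC => by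
    have h1 := hnest a m (by
      simpa using triple_sublist (P := A ++ m :: B) (Q := C) (b := m) (by simp [hB]) hC)
    have h2 := (hmem a).1 (Or.inr (Or.inr (Or.inl hB)))
    exact absurd h1 (h2.elim (fun h => h ▸ lt_irrefl _) (fun h => (hm a h).asymm))
  simp only [List.mem_append, List.mem_cons] at hAB
  have hC0 (a : ℕ) : a ∉ C → C.count a = 0 := List.count_eq_zero_of_not_mem
  have hB0 (a : ℕ) : a ∉ B → B.count a = 0 := List.count_eq_zero_of_not_mem
  have hA0 (a : ℕ) : a ∉ A → A.count a = 0 := List.count_eq_zero_of_not_mem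
  simp only [List.count_append, List.count_cons, beq_iff_eq] at hcount
  refine ⟨(A ++ B).toFinset, fun a ha => ?_, A.toFinset, fun a ha => ?_,
    A, mem_stirlingWords.2 ⟨fun a => ?_, fun a b hab => hnest a b ?_⟩,
    B, mem_stirlingWords.2 ⟨fun a => ?_, fun a b hab => hnest a b ?_⟩,
    C, mem_stirlingWords.2 ⟨fun a => ?_, fun a b hab => hnest a b ?_⟩, rfl⟩
  · have h := hmem a
    simp only [List.mem_toFinset, List.mem_append] at ha
    clear hnest hl hcount hcm hml hml'
    grind
  · simp only [List.mem_toFinset, List.mem_append] at ha ⊢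
    exact Or.inl ha
  · have h := hcount a
    clear hnest hl hcount hcm hml hml'
    simp only [List.mem_toFinset, mem_insert] at h ⊢
    grind
  · exact hab.trans (List.sublist_append_left _ _)
  · have h := hcount a
    clear hnest hl hcount hcm hml hml'
    simp only [mem_sdiff, List.mem_toFinset, List.mem_append, mem_insert] at h ⊢
    grind
  · exact hab.trans (((List.sublist_append_left _ _).cons m).trans (List.sublist_append_right _ _))
  · have h := hcount a
    clear hnest hl hcount hcm hml hml'
    simp only [mem_sdiff, List.mem_toFinset, List.mem_append, mem_insert] at h ⊢
    grind
  · exact hab.trans (((((List.Sublist.refl C).cons m).trans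
      (List.sublist_append_right B _)).cons m).trans (List.sublist_append_right _ _))

theorem stirlingWords_induction {P : Finset ℕ → List ℕ → Prop} (nil : P ∅ [])
    (node : ∀ (S T V : Finset ℕ) (m : ℕ) (A B C : List ℕ), (∀ a ∈ S, m < a) → T ⊆ S → V ⊆ T →
      A ∈ stirlingWords V → B ∈ stirlingWords (T \ V) → C ∈ stirlingWords (S \ T) →
      P V A → P (T \ V) B → P (S \ T) C → P (insert m S) (A ++ m :: (B ++ m :: C)))
    {S : Finset ℕ} {l : List ℕ} (hl : l ∈ stirlingWords S) : P S l := by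
  induction S using Finset.strongInduction generalizing l with
  | H S ih =>
    rcases S.eq_empty_or_nonempty with rfl | hS
    · rw [(eq_nil_iff_of_mem_stirlingWords hl).2 rfl]
      exact nil
    · have hm : ∀ a ∈ S.erase (S.min' hS), S.min' hS < a := fun a ha =>
        S.min'_lt_of_mem_erase_min' hS ha
      have hlt : S.erase (S.min' hS) ⊂ S := erase_ssubset (S.min'_mem hS)
      rw [← insert_erase (S.min'_mem hS)] at hl ⊢
      obtain ⟨T, hT, V, hV, A, hA, B, hB, C, hC, rfl⟩ := exists_node_of_mem_stirlingWords hm hl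
      exact node _ T V _ A B C hm hT hV hA hB hC
        (ih V ((hV.trans hT).trans_ssubset hlt) hA)
        (ih (T \ V) ((sdiff_subset.trans hT).trans_ssubset hlt) hB)
        (ih _ (sdiff_subset.trans_ssubset hlt) hC)

theorem append_cons_cancel_of_not_mem {α : Type*} {m : α} {A A' r r' : List α} (hA : m ∉ A)
    (hA' : m ∉ A') (h : A ++ m :: r = A' ++ m :: r') : A = A' ∧ r = r' := by
  induction A generalizing A' with
  | nil =>
    cases A' with
    | nil => simpa using h
    | cons b A' => simp [(List.cons.inj h).1] at hA'
  | cons a A ih =>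
    cases A' with
    | nil => simp [(List.cons.inj h).1] at hA
    | cons b A' =>
      simp only [List.cons_append, List.cons.injEq, List.mem_cons, not_or] at h hA hA' ⊢
      have := ih hA.2 hA'.2 h.2
      tauto

theorem sum_stirlingWords_insert {M : Type*} [AddCommMonoid M] {S : Finset ℕ} {m : ℕ}
    (hm : ∀ a ∈ S, m < a) (f : List ℕ → M) :
    ∑ l ∈ stirlingWords (insert m S), f l =
      ∑ T ∈ S.powerset, ∑ V ∈ T.powerset, ∑ A ∈ stirlingWords V, ∑ B ∈ stirlingWords (T \ V),
        ∑ C ∈ stirlingWords (S \ T), f (A ++ m :: (B ++ m :: C)) := by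
  rw [sum_sigma', sum_sigma', sum_sigma', sum_sigma']
  symm
  refine sum_bij (fun x _ => x.1.1.2 ++ m :: (x.1.2 ++ m :: x.2)) ?_ ?_ ?_ (fun _ _ => rfl)
  · rintro ⟨⟨⟨⟨T, V⟩, A⟩, B⟩, C⟩ hx
    simp only [mem_sigma, mem_powerset] at hx
    obtain ⟨⟨⟨⟨hT, hV⟩, hA⟩, hB⟩, hC⟩ := hx
    exact node_mem_stirlingWords hm hT hV hA hB hC
  · rintro ⟨⟨⟨⟨T, V⟩, A⟩, B⟩, C⟩ hx ⟨⟨⟨⟨T', V'⟩, A'⟩, B'⟩, C'⟩ hx' heq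
    simp only [mem_sigma, mem_powerset] at hx hx'
    obtain ⟨⟨⟨⟨hT, hV⟩, hA⟩, hB⟩, hC⟩ := hx
    obtain ⟨⟨⟨⟨hT', hV'⟩, hA'⟩, hB'⟩, hC'⟩ := hx'
    have hmS : m ∉ S := fun h => lt_irrefl _ (hm m h)
    have key {X : Finset ℕ} {l : List ℕ} (hX : X ⊆ S) (hl : l ∈ stirlingWords X) : m ∉ l :=
      fun h => hmS (hX ((mem_of_mem_stirlingWords hl).1 h))
    obtain ⟨rfl, h⟩ := append_cons_cancel_of_not_mem (key (hV.trans hT) hA)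
      (key (hV'.trans hT') hA') heq
    obtain ⟨rfl, rfl⟩ := append_cons_cancel_of_not_mem (key (sdiff_subset.trans hT) hB)
      (key (sdiff_subset.trans hT') hB') h
    obtain rfl : V = V' := by
      rw [← toFinset_of_mem_stirlingWords hA, toFinset_of_mem_stirlingWords hA']
    obtain rfl : T = T' := by
      rw [← union_sdiff_of_subset hV, ← union_sdiff_of_subset hV',
        ← toFinset_of_mem_stirlingWords hB, toFinset_of_mem_stirlingWords hB']
    rfl
  · intro l hl
    obtain ⟨T, hT, V, hV, A, hA, B, hB, C, hC, rfl⟩ := exists_node_of_mem_stirlingWords hm hl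
    exact ⟨⟨⟨⟨⟨T, V⟩, A⟩, B⟩, C⟩, by simp [hT, hV, hA, hB, hC], rfl⟩

section Weights

variable {R : Type*} [CommSemiring R]

/-- The weight of a letter `b` preceded by `a` and followed by `c`: a factor `u` for an
ascent-plateau, `v` for a double ascent, `z` for a descent-plateau and `w` for a descent. -/
def letterWeight (u v w z : R) (a b c : ℕ) : R :=
  (if a < b ∧ b = c then u else 1) * (if a < b ∧ b < c then v else 1) *
    (if b < a ∧ b = c then z else 1) * (if c < b then w else 1)

/-- The product of the letter weights of a word preceded by `p` and followed by `e`. -/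
def wordWeight (u v w z : R) : ℕ → ℕ → List ℕ → R
  | _, _, [] => 1
  | p, e, a :: l => letterWeight u v w z p a (l.headD e) * wordWeight u v w z a e l

/-- The word weight, with weight `w` assigned to the empty word. -/
def slotWeight (u v w z : R) (p e : ℕ) (l : List ℕ) : R :=
  if l = [] then w else wordWeight u v w z p e l

/-- The weight contributed by the first occurrence of the minimal letter `m` of a word
`A m B m C`. -/
def branchWeight (u v z : R) (A B : List ℕ) : R :=
  if A = [] then (if B = [] then u else v) else if B = [] then z else 1

variable (u v w z : R)

theorem wordWeight_append_cons (p e b : ℕ) (l r : List ℕ) :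
    wordWeight u v w z p e (l ++ b :: r) =
      wordWeight u v w z p b l * wordWeight u v w z (l.getLastD p) e (b :: r) := by
  induction l generalizing p with
  | nil => simp [wordWeight]
  | cons a l ih =>
    have hhead : (l ++ b :: r).headD e = l.headD b := by cases l <;> simp
    simp only [List.cons_append, List.getLastD_cons]
    rw [wordWeight, ih, wordWeight.eq_2 u v w z p b, hhead]
    ring

theorem wordWeight_node {p e m : ℕ} (hp : p < m) (he : e < m) {A B C : List ℕ}
    (hA : ∀ a ∈ A, m < a) (hB : ∀ a ∈ B, m < a) (hC : ∀ a ∈ C, m < a) :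
    wordWeight u v w z p e (A ++ m :: (B ++ m :: C)) =
      branchWeight u v z A B * wordWeight u v w z p m A * wordWeight u v w z m m B *
        slotWeight u v w z m e C := by
  rw [wordWeight_append_cons, wordWeight, wordWeight_append_cons, wordWeight]
  have h1 : letterWeight u v w z (A.getLastD p) m ((B ++ m :: C).headD e) =
      branchWeight u v z A B := by
    have hA' : A = [] ∧ A.getLastD p = p ∨ A ≠ [] ∧ m < A.getLastD p := by
      rcases List.eq_nil_or_concat A with rfl | ⟨A, a, rfl⟩
      · simp
      · right
        simpa using hA a (by simp)
    generalize A.getLastD p = x at hA' ⊢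
    rcases hA' with ⟨h, h'⟩ | ⟨h, h'⟩ <;> cases B with
    | nil => simp [letterWeight, branchWeight, h, h', hp, hp.not_gt, h'.not_gt]
    | cons b B =>
      have hb := hB b (by simp)
      simp [letterWeight, branchWeight, h, h', hp, hb, hb.ne, hb.not_gt, h'.not_gt]
  have h2 : letterWeight u v w z (B.getLastD m) m (C.headD e) * wordWeight u v w z m e C =
      slotWeight u v w z m e C := by
    have hB' : m ≤ B.getLastD m := by
      rcases List.eq_nil_or_concat B with rfl | ⟨B, b, rfl⟩
      · simp
      · simpa using (hB b (by simp)).le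
    generalize B.getLastD m = x at hB' ⊢
    cases C with
    | nil => simp [letterWeight, slotWeight, wordWeight, hB'.not_gt, he, he.ne']
    | cons c C =>
      have hc := hC c (by simp)
      simp [letterWeight, slotWeight, hB'.not_gt, hc.ne, hc.not_gt]
  rw [h1, h2]
  ring

end Weights

theorem slotWeight_eq_of_mem_stirlingWords {S : Finset ℕ} {l : List ℕ}
    (hl : l ∈ stirlingWords S) :
    ∀ p e, (∀ a ∈ S, p < a ∧ e < a) → slotWeight 4 2 2 2 p e l = 2 ^ (2 * S.card + 1) := by
  refine stirlingWords_induction (P := fun S l => ∀ p e, (∀ a ∈ S, p < a ∧ e < a) →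
      slotWeight 4 2 2 2 p e l = 2 ^ (2 * S.card + 1)) ?_ ?_ hl
  · simp [slotWeight]
  · intro S T V m A B C hm hT hV hA hB hC ihA ihB ihC p e hpe
    have hAm : ∀ a ∈ A, m < a := fun a ha => hm a (hT (hV ((mem_of_mem_stirlingWords hA).1 ha)))
    have hBm : ∀ a ∈ B, m < a := fun a ha =>
      hm a (hT (sdiff_subset ((mem_of_mem_stirlingWords hB).1 ha)))
    have hCm : ∀ a ∈ C, m < a := fun a ha => hm a (sdiff_subset ((mem_of_mem_stirlingWords hC).1 ha))
    have hm' := hpe m (mem_insert_self _ _)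
    have hcard : (insert m S).card = V.card + (T \ V).card + (S \ T).card + 1 := by
      rw [card_insert_of_notMem fun h => lt_irrefl _ (hm m h), add_comm V.card,
        card_sdiff_add_card_eq_card hV, add_comm T.card, card_sdiff_add_card_eq_card hT]
    have h1 := ihA p m fun a ha => ⟨hm'.1.trans (hm a (hT (hV ha))), hm a (hT (hV ha))⟩
    have h2 := ihB m m fun a ha => ⟨hm a (hT (sdiff_subset ha)), hm a (hT (sdiff_subset ha))⟩
    have h3 := ihC m e fun a ha =>
      ⟨hm a (sdiff_subset ha), (hpe a (mem_insert_of_mem (sdiff_subset ha))).2⟩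
    rw [slotWeight, if_neg (by simp), wordWeight_node _ _ _ _ hm'.1 hm'.2 hAm hBm hCm, h3, hcard]
    have h4 : branchWeight 4 2 2 A B * wordWeight 4 2 2 2 p m A * wordWeight 4 2 2 2 m m B =
        slotWeight 4 2 2 2 p m A * slotWeight 4 2 2 2 m m B := by
      by_cases hA0 : A = [] <;> by_cases hB0 : B = [] <;>
        simp [branchWeight, slotWeight, wordWeight, hA0, hB0]
      ring
    rw [h4, h1, h2]
    ring

theorem wordWeight_le_of_mem_stirlingWords {S : Finset ℕ} {l : List ℕ}
    (hl : l ∈ stirlingWords S) :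
    ∀ p e, (∀ a ∈ S, p < a ∧ e < a) → wordWeight 2 2 1 1 p e l ≤ 2 ^ S.card := by
  refine stirlingWords_induction (P := fun S l => ∀ p e, (∀ a ∈ S, p < a ∧ e < a) →
      wordWeight 2 2 1 1 p e l ≤ 2 ^ S.card) ?_ ?_ hl
  · simp [wordWeight]
  · intro S T V m A B C hm hT hV hA hB hC ihA ihB ihC p e hpe
    have hAm : ∀ a ∈ A, m < a := fun a ha => hm a (hT (hV ((mem_of_mem_stirlingWords hA).1 ha)))
    have hBm : ∀ a ∈ B, m < a := fun a ha =>
      hm a (hT (sdiff_subset ((mem_of_mem_stirlingWords hB).1 ha)))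
    have hCm : ∀ a ∈ C, m < a := fun a ha => hm a (sdiff_subset ((mem_of_mem_stirlingWords hC).1 ha))
    have hm' := hpe m (mem_insert_self _ _)
    have hcard : (insert m S).card = V.card + (T \ V).card + (S \ T).card + 1 := by
      rw [card_insert_of_notMem fun h => lt_irrefl _ (hm m h), add_comm V.card,
        card_sdiff_add_card_eq_card hV, add_comm T.card, card_sdiff_add_card_eq_card hT]
    have h1 := ihA p m fun a ha => ⟨hm'.1.trans (hm a (hT (hV ha))), hm a (hT (hV ha))⟩
    have h2 := ihB m m fun a ha => ⟨hm a (hT (sdiff_subset ha)), hm a (hT (sdiff_subset ha))⟩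
    have h3 : slotWeight 2 2 1 1 m e C ≤ 2 ^ (S \ T).card := by
      have h := ihC m e fun a ha =>
        ⟨hm a (sdiff_subset ha), (hpe a (mem_insert_of_mem (sdiff_subset ha))).2⟩
      rw [slotWeight]
      split_ifs
      · exact Nat.one_le_two_pow
      · exact h
    have h4 : branchWeight 2 2 1 A B ≤ 2 := by
      rw [branchWeight]
      split_ifs <;> simp
    rw [wordWeight_node _ _ _ _ hm'.1 hm'.2 hAm hBm hCm, hcard]
    calc _ ≤ 2 * 2 ^ V.card * 2 ^ (T \ V).card * 2 ^ (S \ T).card := by gcongr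
      _ = _ := by ring

theorem wordWeight_eq_zero_of_mem_stirlingWords {S : Finset ℕ} {l : List ℕ}
    (hl : l ∈ stirlingWords S) (hS : S.Nonempty) :
    ∀ p e, (∀ a ∈ S, p < a ∧ e < a) → wordWeight (0 : ℕ) 1 1 1 p e l = 0 := by
  refine stirlingWords_induction (P := fun S l => S.Nonempty → ∀ p e, (∀ a ∈ S, p < a ∧ e < a) →
      wordWeight (0 : ℕ) 1 1 1 p e l = 0) ?_ ?_ hl hS
  · simp
  · intro S T V m A B C hm hT hV hA hB hC ihA ihB ihC _ p e hpe
    have hAm : ∀ a ∈ A, m < a := fun a ha => hm a (hT (hV ((mem_of_mem_stirlingWords hA).1 ha)))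
    have hBm : ∀ a ∈ B, m < a := fun a ha =>
      hm a (hT (sdiff_subset ((mem_of_mem_stirlingWords hB).1 ha)))
    have hCm : ∀ a ∈ C, m < a := fun a ha => hm a (sdiff_subset ((mem_of_mem_stirlingWords hC).1 ha))
    have hm' := hpe m (mem_insert_self _ _)
    rw [wordWeight_node _ _ _ _ hm'.1 hm'.2 hAm hBm hCm]
    rcases V.eq_empty_or_nonempty with hV0 | hV0
    · rcases (T \ V).eq_empty_or_nonempty with hB0 | hB0
      · simp [branchWeight, (eq_nil_iff_of_mem_stirlingWords hA).2 hV0,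
          (eq_nil_iff_of_mem_stirlingWords hB).2 hB0]
      · rw [ihB hB0 m m fun a ha => ⟨hm a (hT (sdiff_subset ha)), hm a (hT (sdiff_subset ha))⟩]
        ring
    · rw [ihA hV0 p m fun a ha => ⟨hm'.1.trans (hm a (hT (hV ha))), hm a (hT (hV ha))⟩]
      ring

section Derivation

variable {A : Type*} [CommRing A] [Algebra ℚ A] {D : Derivation ℚ A A} {u v w : A}

theorem four_mul_iterate_derivation_succ (hu : D u = u * v * w) (hv : D v = 2 * (u * w)) (k : ℕ) :
    4 * D^[k + 1] u = D^[k + 1] (v * v) := by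
  have h : D (v * v) = 4 • D u := by
    rw [Derivation.leibniz, hu, hv, smul_eq_mul, nsmul_eq_mul]
    push_cast
    ring
  rw [Function.iterate_succ_apply, Function.iterate_succ_apply, h, iterate_map_nsmul, nsmul_eq_mul]
  push_cast
  rfl

theorem iterate_derivation_succ (hv : D v = 2 * (u * w)) (hw : D w = u * w) (k : ℕ) :
    D^[k + 1] v = 2 * D^[k + 1] w := by
  have h : D v = 2 • D w := by
    rw [hv, hw, nsmul_eq_mul]
    push_cast
    ring
  rw [Function.iterate_succ_apply, Function.iterate_succ_apply, h, iterate_map_nsmul, nsmul_eq_mul]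
  push_cast
  rfl

theorem iterate_derivation_eq_sum_powerset (hu : D u = u * v * w) (hv : D v = 2 * (u * w))
    (hw : D w = u * w) (T : Finset ℕ) :
    D^[T.card] u = ∑ V ∈ T.powerset,
      if V = ∅ then (if T \ V = ∅ then u else v * D^[(T \ V).card] w)
      else if T \ V = ∅ then 0 else D^[V.card] w * D^[(T \ V).card] w := by
  rcases T.eq_empty_or_nonempty with rfl | hT
  · simp
  have hv' {X : Finset ℕ} (hX : X ≠ ∅) : D^[X.card] v = 2 * D^[X.card] w := by
    obtain ⟨k, hk⟩ := Nat.exists_eq_succ_of_ne_zero (card_ne_zero.2 (nonempty_iff_ne_empty.2 hX))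
    rw [hk]
    exact iterate_derivation_succ hv hw k
  have h4 : 4 * D^[T.card] u = D^[T.card] (v * v) := by
    obtain ⟨k, hk⟩ := Nat.exists_eq_succ_of_ne_zero (card_ne_zero.2 hT)
    rw [hk]
    exact four_mul_iterate_derivation_succ hu hv k
  have hunit : IsUnit (4 : A) := by
    have h := (IsUnit.mk0 (4 : ℚ) (by norm_num)).map (algebraMap ℚ A)
    rwa [map_ofNat] at h
  refine hunit.mul_left_cancel ?_
  rw [h4, D.iterate_mul_powerset, mul_sum]
  have hterm : ∀ V ∈ T.powerset, D^[V.card] v * D^[(T \ V).card] v =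
      4 * (if V = ∅ then (if T \ V = ∅ then u else v * D^[(T \ V).card] w)
        else if T \ V = ∅ then 0 else D^[V.card] w * D^[(T \ V).card] w) -
      (if V = ∅ then 2 * v * D^[T.card] w else 0) +
      (if V = T then 2 * v * D^[T.card] w else 0) := by
    intro V hV
    rw [mem_powerset] at hV
    rcases eq_or_ne V ∅ with rfl | hV0
    · simp only [sdiff_empty, hT.ne_empty, hT.ne_empty.symm, if_true, if_false, card_empty,
        Function.iterate_zero, id, hv' hT.ne_empty]
      ring
    · rcases eq_or_ne V T with rfl | hVT
      · simp only [sdiff_self, bot_eq_empty, hV0, if_true, if_false, card_empty,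
          Function.iterate_zero, id, hv' hV0]
        ring
      · have hTV : T \ V ≠ ∅ := fun h => hVT (hV.antisymm (sdiff_eq_empty_iff_subset.1 h))
        simp only [hV0, hVT, hTV, if_false, hv' hV0, hv' hTV]
        ring
  rw [sum_congr rfl hterm, sum_add_distrib, sum_sub_distrib, sum_ite_eq' , sum_ite_eq']
  simp

theorem sum_slotWeight_stirlingWords (hu : D u = u * v * w) (hv : D v = 2 * (u * w))
    (hw : D w = u * w) (S : Finset ℕ) (p e : ℕ) (hpe : ∀ a ∈ S, p < a ∧ e < a) :
    ∑ l ∈ stirlingWords S, slotWeight u v w 0 p e l = D^[S.card] w := by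
  induction S using Finset.strongInduction generalizing p e with
  | H S ih =>
    rcases S.eq_empty_or_nonempty with rfl | hS
    · simp [stirlingWords_empty, slotWeight]
    · have hm : ∀ a ∈ S.erase (S.min' hS), S.min' hS < a := fun a ha =>
        S.min'_lt_of_mem_erase_min' hS ha
      have hlt : S.erase (S.min' hS) ⊂ S := erase_ssubset (S.min'_mem hS)
      have hm' := hpe _ (S.min'_mem hS)
      have hS' : insert (S.min' hS) (S.erase (S.min' hS)) = S := insert_erase (S.min'_mem hS)
      rw [← card_erase_add_one (S.min'_mem hS), Function.iterate_succ_apply, hw,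
        D.iterate_mul_powerset]
      nth_rewrite 1 [← hS']
      generalize S.min' hS = m at *
      rw [sum_stirlingWords_insert hm]
      refine sum_congr rfl fun T hT => ?_
      rw [mem_powerset] at hT
      rw [iterate_derivation_eq_sum_powerset hu hv hw, sum_mul]
      refine sum_congr rfl fun V hV => ?_
      rw [mem_powerset] at hV
      have hVS := hV.trans hT
      have hTV : T \ V ⊆ S.erase m := sdiff_subset.trans hT
      have hST : S.erase m \ T ⊆ S.erase m := sdiff_subset
      rw [← ih (S.erase m \ T) (hST.trans_ssubset hlt) m e
        fun a ha => ⟨hm a (hST ha), (hpe a (hlt.subset (hST ha))).2⟩]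
      have hsum : ∀ X ⊆ S.erase m, ∀ q, (∀ a ∈ X, q < a) →
          ∑ l ∈ stirlingWords X, wordWeight u v w 0 q m l = if X = ∅ then 1 else D^[X.card] w := by
        intro X hX q hq
        split_ifs with hX0
        · simp [hX0, stirlingWords_empty, wordWeight]
        · rw [← ih X (hX.trans_ssubset hlt) q m fun a ha => ⟨hq a ha, hm a (hX ha)⟩]
          refine sum_congr rfl fun l hl => ?_
          rw [slotWeight, if_neg fun h => hX0 ((eq_nil_iff_of_mem_stirlingWords hl).1 h)]
      have hbranch : (if V = ∅ then (if T \ V = ∅ then u else v * D^[(T \ V).card] w)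
          else if T \ V = ∅ then 0 else D^[V.card] w * D^[(T \ V).card] w) =
          (if V = ∅ then (if T \ V = ∅ then u else v) else if T \ V = ∅ then 0 else 1) *
          (∑ l ∈ stirlingWords V, wordWeight u v w 0 p m l) *
            ∑ l ∈ stirlingWords (T \ V), wordWeight u v w 0 m m l := by
        rw [hsum V hVS p fun a ha => hm'.1.trans (hm a (hVS ha)),
          hsum (T \ V) hTV m fun a ha => hm a (hTV ha)]
        split_ifs <;> ring
      rw [hbranch, mul_assoc, sum_mul_sum, mul_assoc, sum_mul, mul_sum]
      refine sum_congr rfl fun A hA => ?_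
      rw [mul_sum, mul_sum]
      refine sum_congr rfl fun B hB => ?_
      rw [mul_sum, mul_sum]
      refine sum_congr rfl fun C hC => ?_
      rw [slotWeight, if_neg (by simp), wordWeight_node _ _ _ _ hm'.1 hm'.2
        (fun a ha => hm a (hVS ((mem_of_mem_stirlingWords hA).1 ha)))
        (fun a ha => hm a (hTV ((mem_of_mem_stirlingWords hB).1 ha)))
        (fun a ha => hm a (hST ((mem_of_mem_stirlingWords hC).1 ha)))]
      simp only [branchWeight, eq_nil_iff_of_mem_stirlingWords hA,
        eq_nil_iff_of_mem_stirlingWords hB]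
      ring

end Derivation

theorem wordWeight_map_range {R : Type*} [CommSemiring R] (u v w z : R) (s : ℕ → ℕ) (N : ℕ) :
    wordWeight u v w z (s 0) (s (N + 1)) ((List.range N).map fun i => s (i + 1)) =
      ∏ i ∈ range N, letterWeight u v w z (s i) (s (i + 1)) (s (i + 2)) := by
  induction N generalizing s with
  | zero => simp [wordWeight]
  | succ N ih =>
    have h := ih fun i => s (i + 1)
    rw [List.range_succ_eq_map, List.map_cons, List.map_map, wordWeight, prod_range_succ']
    rw [mul_comm]
    congr 1
    congr 1
    cases N with
    | zero => simp
    | succ N => simp [List.range_succ_eq_map]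

theorem ofFn_eq_map_sval {n : ℕ} (σ : Fin (2 * n) → Fin (n + 1)) :
    List.ofFn (fun i => (σ i : ℕ)) = (List.range (2 * n)).map fun i => sval σ (i + 1) := by
  refine List.ext_getElem (by simp) fun i h1 h2 => ?_
  have hi : i + 1 ≤ 2 * n := by simpa using h1
  simp only [List.getElem_ofFn, List.getElem_map, List.getElem_range, sval]
  rw [dif_pos ⟨by omega, hi⟩]
  rfl

/-- The number of descents, with the convention `σ_{2n+1} = 0`. -/
def desQ {n : ℕ} (σ : Fin (2 * n) → Fin (n + 1)) : ℕ :=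
  ((Icc 1 (2 * n)).filter (fun i => sval σ (i + 1) < sval σ i)).card

theorem wordWeight_ofFn {R : Type*} [CommSemiring R] (u v w z : R) {n : ℕ}
    (σ : Fin (2 * n) → Fin (n + 1)) (hσ : ∀ i, σ i ≠ 0) :
    wordWeight u v w z 0 0 (List.ofFn fun i => (σ i : ℕ)) =
      u ^ lapQ σ * v ^ dascQ σ * z ^ dpQ σ * w ^ desQ σ := by
  have h0 : sval σ 0 = 0 := by simp [sval]
  have hlast : sval σ (2 * n + 1) = 0 := by simp [sval]
  have h := wordWeight_map_range u v w z (sval σ) (2 * n)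
  rw [h0, hlast, ← ofFn_eq_map_sval] at h
  have hIcc : ∏ i ∈ range (2 * n),
      letterWeight u v w z (sval σ i) (sval σ (i + 1)) (sval σ (i + 2)) =
      ∏ i ∈ Icc 1 (2 * n),
        letterWeight u v w z (sval σ (i - 1)) (sval σ i) (sval σ (i + 1)) := by
    rw [← Ico_add_one_right_eq_Icc, prod_Ico_eq_prod_range]
    refine prod_congr (by simp) fun i _ => ?_
    rw [show 1 + i - 1 = i by omega, show 1 + i + 1 = i + 2 by omega, add_comm 1 i]
  have hne (i : ℕ) (h1 : 1 ≤ i) (h2 : i ≤ 2 * n) (h3 : ¬ i ≤ 2 * n - 1) : sval σ (i + 1) = 0 := by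
    rw [show i = 2 * n by omega, hlast]
  rw [h, hIcc]
  simp only [letterWeight, prod_mul_distrib, ← prod_filter, prod_const]
  unfold lapQ dascQ dpQ desQ
  congr 1
  congr 1
  congr 1
  all_goals
    congr 2
    ext i
    simp only [mem_filter, mem_Icc]
    refine ⟨fun ⟨⟨hi, hi'⟩, h1, h2⟩ => ⟨⟨?_, ?_⟩, h1, h2⟩,
      fun ⟨⟨hi, hi'⟩, h1, h2⟩ => ⟨⟨by omega, by omega⟩, h1, h2⟩⟩
  · exact hi
  · by_contra h3
    have := hne i hi hi' h3
    omega
  · exact hi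
  · by_contra h3
    have := hne i hi hi' h3
    omega
  · by_contra h3
    rw [show i - 1 = 0 by omega, h0] at h1
    omega
  · by_contra h3
    have h4 := hne i hi hi' h3
    refine hσ ⟨i - 1, by omega⟩ (Fin.ext ?_)
    rw [h4, sval, dif_pos ⟨by omega, hi'⟩] at h2
    exact h2

theorem triple_sublist_ofFn_iff {α : Type*} {N : ℕ} {f : Fin N → α} {a b : α} :
    [a, b, a].Sublist (List.ofFn f) ↔
      ∃ i j k : Fin N, i < j ∧ j < k ∧ f i = a ∧ f j = b ∧ f k = a := by
  constructor
  · intro h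
    obtain ⟨g, hg⟩ := List.sublist_iff_exists_fin_orderEmbedding_get_eq.1 h
    let c : Fin (List.ofFn f).length → Fin N := Fin.cast (by simp)
    refine ⟨c (g ⟨0, by simp⟩), c (g ⟨1, by simp⟩), c (g ⟨2, by simp⟩), ?_, ?_, ?_, ?_, ?_⟩
    · exact g.strictMono (by simp)
    · exact g.strictMono (by simp)
    · exact ((hg ⟨0, by simp⟩).trans (by simp [c, Fin.cast])).symm
    · exact ((hg ⟨1, by simp⟩).trans (by simp [c, Fin.cast])).symm
    · exact ((hg ⟨2, by simp⟩).trans (by simp [c, Fin.cast])).symm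
  · rintro ⟨i, j, k, hij, hjk, rfl, rfl, hk⟩
    have h : ([i, j, k].map f).Sublist ((List.finRange N).map f) := by
      refine List.Sublist.map f ?_
      refine List.sublist_of_subperm_of_pairwise (r := (· < ·)) ?_ ?_ ?_
      · refine List.subperm_of_subset ?_ fun x _ => List.mem_finRange x
        simp [hij.ne, hjk.ne, (hij.trans hjk).ne]
      · simp [hij, hjk, hij.trans hjk]
      · exact List.pairwise_lt_finRange N
    rw [List.map_cons, List.map_cons, List.map_cons, hk] at h
    rwa [List.ofFn_eq_map]

theorem count_ofFn {α : Type*} [DecidableEq α] {N : ℕ} (f : Fin N → α) (a : α) :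
    (List.ofFn f).count a = (univ.filter fun i => f i = a).card := by
  rw [List.ofFn_eq_map, List.count, List.countP_map, List.countP_eq_length_filter,
    ← List.toFinset_card_of_nodup ((List.nodup_finRange N).filter _)]
  congr 1
  ext i
  simp

theorem ofFn_mem_stirlingWords_iff {n : ℕ} {σ : Fin (2 * n) → Fin (n + 1)} :
    List.ofFn (fun i => (σ i : ℕ)) ∈ stirlingWords (Icc 1 n) ↔ σ ∈ StirlingSet n := by
  rw [mem_stirlingWords, StirlingSet, mem_filter, and_iff_right (mem_univ σ)]
  refine and_congr ⟨fun h v hv => ?_, fun h a => ?_⟩ ⟨fun h i j k hij hjk hik => ?_, fun h a b hab => ?_⟩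
  · have h1 := h v
    rw [count_ofFn, if_pos (mem_Icc.2 ⟨by omega, by omega⟩)] at h1
    simpa [Fin.val_inj] using h1
  · rw [count_ofFn]
    by_cases ha : a < n + 1
    · have hpos (v : Fin (n + 1)) (hv : (v : ℕ) ≠ 0) : (univ.filter fun i => (σ i : ℕ) = v).card = 2 := by
        simpa [Fin.val_inj] using h v hv
      rcases Nat.eq_zero_or_pos a with rfl | ha0
      · have htot := card_eq_sum_card_fiberwise (f := σ) (s := univ) (t := univ)
          fun _ _ => mem_coe.2 (mem_univ _)
        rw [Fin.sum_univ_succ, sum_congr rfl fun v _ => h (Fin.succ v) (by simp)] at htot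
        simp only [card_univ, Fintype.card_fin, sum_const, smul_eq_mul] at htot
        have h0 : (univ.filter fun i => σ i = 0).card = 0 := by omega
        simp only [← Fin.val_inj, Fin.val_zero] at h0
        rw [if_neg (by simp), h0]
      · rw [if_pos (mem_Icc.2 ⟨ha0, by omega⟩)]
        exact hpos ⟨a, ha⟩ ha0.ne'
    · rw [if_neg fun h => ha (Nat.lt_succ_of_le (mem_Icc.1 h).2), card_eq_zero,
        filter_eq_empty_iff]
      intro i _
      have := (σ i).isLt
      omega
  · exact h _ _ (triple_sublist_ofFn_iff.2 ⟨i, j, k, hij, hjk, rfl, rfl, by rw [hik]⟩)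
  · obtain ⟨i, j, k, hij, hjk, rfl, rfl, hk⟩ := triple_sublist_ofFn_iff.1 hab
    exact h i j k hij hjk (Fin.ext hk.symm)

theorem sum_stirlingWords_Icc {M : Type*} [AddCommMonoid M] (n : ℕ) (f : List ℕ → M) :
    ∑ l ∈ stirlingWords (Icc 1 n), f l =
      ∑ σ ∈ StirlingSet n, f (List.ofFn fun i => (σ i : ℕ)) := by
  symm
  refine sum_bij (fun σ _ => List.ofFn fun i => (σ i : ℕ)) ?_ ?_ ?_ (fun _ _ => rfl)
  · exact fun σ hσ => ofFn_mem_stirlingWords_iff.2 hσ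
  · intro σ _ τ _ h
    funext i
    exact Fin.ext (congrFun (List.ofFn_injective h) i)
  · intro l hl
    have hlen : l.length = 2 * n := by
      simpa using length_of_mem_stirlingWords hl
    have hi (i : Fin (2 * n)) : (i : ℕ) < l.length := i.isLt.trans_eq hlen.symm
    have hlt (i : Fin (2 * n)) : l[(i : ℕ)]'(hi i) < n + 1 := by
      have h := (mem_of_mem_stirlingWords hl).1 (List.getElem_mem (hi i))
      exact Nat.lt_succ_of_le (mem_Icc.1 h).2
    have heq : (List.ofFn fun i : Fin (2 * n) => l[(i : ℕ)]'(hi i)) = l :=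
      List.ext_getElem (by simp [hlen]) fun i _ _ => by simp
    exact ⟨fun i => ⟨l[(i : ℕ)]'(hi i), hlt i⟩, ofFn_mem_stirlingWords_iff.1 (by simpa [heq] using hl),
      heq⟩

theorem statement_16
    (D : Derivation ℚ (MvPolynomial (Fin 3) ℚ) (MvPolynomial (Fin 3) ℚ))
    (hu : D (X 0) = X 0 * X 1 * X 2)
    (hv : D (X 1) = 2 * (X 0 * X 2))
    (hw : D (X 2) = X 0 * X 2) (n : ℕ) (hn : 1 ≤ n) :
    (D.toLinearMap ^ n) (X 2) =
      ∑ i ∈ Finset.Icc 1 n, ∑ j ∈ Finset.range n,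
        (gammaNum n i j : MvPolynomial (Fin 3) ℚ) *
          X 0 ^ i * X 1 ^ j * X 2 ^ (2 * n + 1 - 2 * i - j) := by
  have hmem {σ : Fin (2 * n) → Fin (n + 1)} (hσ : σ ∈ StirlingSet n) :=
    ofFn_mem_stirlingWords_iff.2 hσ
  have hpos : ∀ a ∈ Icc 1 n, 0 < a ∧ 0 < a := fun a ha => by
    simp only [mem_Icc] at ha
    omega
  have hne (σ : Fin (2 * n) → Fin (n + 1)) : List.ofFn (fun i => (σ i : ℕ)) ≠ [] := by
    rw [ne_eq, List.ofFn_eq_nil_iff]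
    omega
  have hσ0 {σ : Fin (2 * n) → Fin (n + 1)} (hσ : σ ∈ StirlingSet n) (i : Fin (2 * n)) :
      σ i ≠ 0 := fun h => by
    have := (mem_of_mem_stirlingWords (hmem hσ)).1 (List.mem_ofFn.2 ⟨i, rfl⟩)
    simp [h] at this
  have hdeg {σ : Fin (2 * n) → Fin (n + 1)} (hσ : σ ∈ StirlingSet n) :
      2 * lapQ σ + dascQ σ + dpQ σ + desQ σ = 2 * n + 1 := by
    have h := slotWeight_eq_of_mem_stirlingWords (hmem hσ) 0 0 hpos
    rw [slotWeight, if_neg (hne σ), wordWeight_ofFn _ _ _ _ _ (hσ0 hσ), Nat.card_Icc, show 4 = 2 ^ 2 by rfl,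
      ← pow_mul, ← pow_add, ← pow_add, ← pow_add] at h
    simpa using Nat.pow_right_injective le_rfl h
  have hle {σ : Fin (2 * n) → Fin (n + 1)} (hσ : σ ∈ StirlingSet n) :
      lapQ σ + dascQ σ ≤ n := by
    have h := wordWeight_le_of_mem_stirlingWords (hmem hσ) 0 0 hpos
    rw [wordWeight_ofFn _ _ _ _ _ (hσ0 hσ), Nat.card_Icc, one_pow, one_pow, mul_one, mul_one, ← pow_add] at h
    simpa using (Nat.pow_le_pow_iff_right one_lt_two).1 h
  have hlap {σ : Fin (2 * n) → Fin (n + 1)} (hσ : σ ∈ StirlingSet n) : lapQ σ ≠ 0 := by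
    have h := wordWeight_eq_zero_of_mem_stirlingWords (hmem hσ) (nonempty_Icc.2 hn) 0 0 hpos
    rw [wordWeight_ofFn _ _ _ _ _ (hσ0 hσ)] at h
    intro h0
    simp [h0] at h
  rw [Module.End.pow_apply]
  have key := sum_slotWeight_stirlingWords hu hv hw (Icc 1 n) 0 0 hpos
  rw [Nat.card_Icc, Nat.add_sub_cancel, sum_stirlingWords_Icc] at key
  refine key.symm.trans ?_
  have hweight : ∀ σ ∈ StirlingSet n,
      slotWeight (X 0 : MvPolynomial (Fin 3) ℚ) (X 1) (X 2) 0 0 0 (List.ofFn fun i => (σ i : ℕ)) =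
      if dpQ σ = 0 then X 0 ^ lapQ σ * X 1 ^ dascQ σ * X 2 ^ (2 * n + 1 - 2 * lapQ σ - dascQ σ)
      else 0 := by
    intro σ hσ
    rw [slotWeight, if_neg (hne σ), wordWeight_ofFn _ _ _ _ _ (hσ0 hσ)]
    have h := hdeg hσ
    split_ifs with hdp
    · rw [hdp, pow_zero, mul_one, show 2 * n + 1 - 2 * lapQ σ - dascQ σ = desQ σ by omega]
    · rw [zero_pow hdp, mul_zero, zero_mul]
  rw [sum_congr rfl hweight, ← sum_filter, ← sum_product',
    ← sum_fiberwise_of_maps_to (g := fun σ => (lapQ σ, dascQ σ)) (t := Icc 1 n ×ˢ range n)]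
  · refine sum_congr rfl fun x _ => ?_
    have hcard : gammaNum n x.1 x.2 =
        (((StirlingSet n).filter fun σ => dpQ σ = 0).filter
          fun σ => (lapQ σ, dascQ σ) = x).card := by
      rw [gammaNum, filter_filter]
      congr 1
      refine filter_congr fun σ _ => ?_
      rw [Prod.ext_iff]
      tauto
    rw [hcard, mul_assoc, mul_assoc, ← nsmul_eq_mul, ← sum_const]
    refine sum_congr rfl fun σ hσ => ?_
    rw [← (mem_filter.1 hσ).2, mul_assoc]
  · intro σ hσ
    have hσ' := (mem_filter.1 hσ).1
    have h1 := hle hσ'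
    have h2 := hlap hσ'
    simp only [mem_product, mem_Icc, mem_range]
    omega
end

section
/- For every n ≥ 1 and every k with 0 ≤ k ≤ n−1, γ_{n,n−k,k} equals the Eulerian number ⟨n,k⟩; that is, the number of Stirling permutations σ ∈ Q_n with lap(σ) = n−k, dasc(σ) = k and dp(σ) = 0 equals the number of permutations π of {1,…,n} with exactly k descents. -/
open Finset MvPolynomial

/-- The value `π(i) ∈ {1,…,n}` at position `i ∈ {1,…,n}` of a permutation of `[n]`
in one-line notation (and `0` outside the range). -/
def pval {n : ℕ} (π : Equiv.Perm (Fin n)) (i : ℕ) : ℕ :=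
  if h : 1 ≤ i ∧ i ≤ n then (π ⟨i - 1, by omega⟩ : ℕ) + 1 else 0

/-- The number of descents of a permutation of `[n]`:
`#{i ∈ [n-1] : π(i) > π(i+1)}`. -/
def pdes {n : ℕ} (π : Equiv.Perm (Fin n)) : ℕ :=
  ((Finset.Icc 1 (n - 1)).filter (fun i => pval π (i + 1) < pval π i)).card

/-- The Eulerian number `⟨n,k⟩`: the number of permutations of `[n]` with
exactly `k` descents. -/
def eulerianNum (n k : ℕ) : ℕ :=
  (Finset.univ.filter (fun π : Equiv.Perm (Fin n) => pdes π = k)).card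

/-! ### Words as lists, read from right to left -/

/-- The values `f m, f (m - 1), …, f 1` as a list. -/
def revWord (f : ℕ → ℕ) : ℕ → List ℕ
  | 0 => []
  | m + 1 => f (m + 1) :: revWord f m

/-- The number of letters that exceed their successor, the last letter being followed by `0`. -/
def dropCount : List ℕ → ℕ
  | [] => 0
  | a :: l => (if l.headD 0 < a then 1 else 0) + dropCount l

/-- The number of letters equal to their successor. -/
def platCount : List ℕ → ℕ
  | [] => 0
  | a :: l => (if l.head? = some a then 1 else 0) + platCount l

/-- The number of letters smaller than their successor. -/
def riseCount : List ℕ → ℕ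
  | [] => 0
  | a :: l => (if a < l.headD 0 then 1 else 0) + riseCount l

/-- The letters between two equal letters are larger. -/
def IsStirling (w : List ℕ) : Prop :=
  ∀ a b, [a, b, a].Sublist w → a < b

/-- Reading a list from right to left, each letter `v` is added on the left, together with
a second copy of `v` placed after the maximal initial run of letters larger than `v`. -/
def doubling : List ℕ → List ℕ
  | [] => []
  | v :: t => v :: ((doubling t).takeWhile (v < ·) ++ v :: (doubling t).dropWhile (v < ·))

lemma IsStirling.sublist {w w' : List ℕ} (h : IsStirling w) (hs : w'.Sublist w) :
    IsStirling w' :=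
  fun a b hab => h a b (hab.trans hs)

lemma dropCount_append {B X : List ℕ} (h : ∀ x ∈ B, X.headD 0 < x) :
    dropCount (B ++ X) = dropCount B + dropCount X := by
  induction B with
  | nil => simp [dropCount]
  | cons b B ih =>
    have ih := ih fun x hx => h x (List.mem_cons_of_mem _ hx)
    have hb := h b List.mem_cons_self
    cases B with
    | nil =>
      have : 0 < b := by omega
      simp only [List.cons_append, List.nil_append, dropCount, if_pos hb]
      simp [this, add_comm]
    | cons c B =>
      rw [List.cons_append, dropCount, ih, dropCount.eq_2 b (c :: B)]
      simp [add_assoc]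

lemma platCount_append {B X : List ℕ} (h : ∀ x ∈ B, X.headD 0 < x) :
    platCount (B ++ X) = platCount B + platCount X := by
  induction B with
  | nil => simp [platCount]
  | cons b B ih =>
    have ih := ih fun x hx => h x (List.mem_cons_of_mem _ hx)
    have hb := h b List.mem_cons_self
    cases B with
    | nil =>
      cases X with
      | nil => simp [platCount]
      | cons x X =>
        have : x ≠ b := by simp at hb; omega
        simp [platCount, this]
    | cons c B =>
      rw [List.cons_append, platCount, ih, platCount.eq_2 b (c :: B)]
      simp [add_assoc]

lemma dropCount_insert_pair {v : ℕ} {B A : List ℕ} (hB : ∀ x ∈ B, v < x)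
    (hA : A.headD 0 < v) :
    dropCount (v :: (B ++ v :: A)) = dropCount (B ++ A) + 1 := by
  rw [dropCount, dropCount_append (by simpa using hB),
    dropCount_append fun x hx => hA.trans (hB x hx), dropCount, if_pos hA]
  have : ¬ (B ++ v :: A).headD 0 < v := by
    cases B with
    | nil => simp
    | cons b B => simpa using (hB b List.mem_cons_self).le
  rw [if_neg this]
  omega

lemma platCount_insert_pair {v : ℕ} {B A : List ℕ} (hB : ∀ x ∈ B, v < x)
    (hA : A.headD 0 < v) :
    platCount (v :: (B ++ v :: A)) = platCount (B ++ A) + if B = [] then 1 else 0 := by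
  rw [platCount, platCount_append (by simpa using hB),
    platCount_append fun x hx => hA.trans (hB x hx), platCount]
  have hA' : A.head? ≠ some v := by
    cases A with
    | nil => simp
    | cons a A => simp at hA ⊢; omega
  rw [if_neg hA']
  cases B with
  | nil => simp; omega
  | cons b B =>
    have := hB b List.mem_cons_self
    simp [this.ne']

lemma IsStirling.dropCount_le {w : List ℕ} (h : IsStirling w) :
    dropCount w ≤ w.toFinset.card := by
  induction w with
  | nil => simp [dropCount]
  | cons a l ih =>
    have ih := ih (h.sublist (List.sublist_cons_self a l))
    rw [dropCount]
    split_ifs with hd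
    · have ha : a ∉ l := by
        intro ha
        cases l with
        | nil => simp at ha
        | cons b l =>
          simp at hd
          have ha : a ∈ l := by
            rcases List.mem_cons.1 ha with rfl | ha
            · omega
            · exact ha
          have := h a b (by simpa using ha)
          omega
      rw [List.toFinset_cons, Finset.card_insert_of_notMem (by simpa using ha)]
      omega
    · have : l.toFinset.card ≤ (a :: l).toFinset.card := by
        rw [List.toFinset_cons]
        exact Finset.card_le_card (Finset.subset_insert _ _)
      omega

lemma IsStirling.dropCount_eq_of_append {X Y : List ℕ} (h : IsStirling (X ++ Y))
    (hd : dropCount (X ++ Y) = (X ++ Y).toFinset.card) :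
    dropCount Y = Y.toFinset.card := by
  induction X with
  | nil => simpa using hd
  | cons a X ih =>
    have hs : IsStirling (X ++ Y) := h.sublist (List.sublist_cons_self a _)
    refine ih hs ?_
    have hle := hs.dropCount_le
    rw [List.cons_append, dropCount, List.toFinset_cons] at hd
    by_cases ha : a ∈ X ++ Y
    · rw [Finset.insert_eq_of_mem (by simpa using ha)] at hd
      split_ifs at hd with hlt
      · exfalso
        obtain ⟨b, l, hl⟩ : ∃ b l, X ++ Y = b :: l := by
          cases hXY : X ++ Y with
          | nil => simp [hXY] at ha
          | cons b l => exact ⟨b, l, rfl⟩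
        rw [hl] at hlt ha
        simp at hlt
        have ha : a ∈ l := by
          rcases List.mem_cons.1 ha with rfl | ha
          · omega
          · exact ha
        have := h a b (by rw [List.cons_append, hl]; simpa using ha)
        omega
      · omega
    · rw [Finset.card_insert_of_notMem (by simpa using ha)] at hd
      split_ifs at hd <;> omega

lemma doubling_perm (l : List ℕ) : (doubling l).Perm (l ++ l) := by
  induction l with
  | nil => simp [doubling]
  | cons v t ih =>
    rw [doubling]
    refine List.Perm.trans (List.Perm.cons v ?_)
      (List.Perm.cons v (List.perm_middle (a := v) (l₁ := t) (l₂ := t)).symm)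
    refine List.perm_middle.trans (List.Perm.cons v ?_)
    rwa [List.takeWhile_append_dropWhile]

lemma mem_doubling {l : List ℕ} {x : ℕ} : x ∈ doubling l ↔ x ∈ l := by
  simp [(doubling_perm l).mem_iff]

lemma head?_doubling (l : List ℕ) : (doubling l).head? = l.head? := by
  cases l <;> simp [doubling]

lemma doubling_injective : Function.Injective doubling := by
  intro l
  induction l with
  | nil => intro l' h; cases l' <;> simp_all [doubling]
  | cons v t ih =>
    intro l' h
    cases l' with
    | nil => simp [doubling] at h
    | cons v' t' =>
      have key : ∀ v t, ((doubling (v :: t)).tail).erase v = doubling t := by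
        intro v t
        rw [doubling, List.tail_cons, List.erase_append_right _ (fun hm => by
          simpa using List.mem_takeWhile_imp hm), List.erase_cons_head,
          List.takeWhile_append_dropWhile]
      have hv : v = v' := by simpa [doubling] using congrArg List.head? h
      subst hv
      have := key v t
      rw [h, key] at this
      rw [ih this.symm]

lemma lt_of_mem_takeWhile {v x : ℕ} {l : List ℕ} (h : x ∈ l.takeWhile (v < ·)) : v < x := by
  simpa using List.mem_takeWhile_imp h

lemma headD_dropWhile_lt {v : ℕ} (hv : 0 < v) {l : List ℕ} (h : v ∉ l) :
    (l.dropWhile (v < ·)).headD 0 < v := by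
  cases hl : l.dropWhile (v < ·) with
  | nil => simpa
  | cons a A =>
    have h1 := List.head_dropWhile_not (fun x => decide (v < x)) (l := l) (by simp [hl])
    have h2 : a ∈ l := (List.dropWhile_suffix (fun x => decide (v < x))).subset (by simp [hl])
    simp [hl] at h1
    have : a ≠ v := fun e => h (e ▸ h2)
    simp
    omega

lemma IsStirling.insert_pair {v : ℕ} {B A : List ℕ} (h : IsStirling (B ++ A))
    (hB : ∀ x ∈ B, v < x) (hA : A.headD 0 < v) (hvA : v ∉ A) :
    IsStirling (v :: (B ++ v :: A)) := by
  intro a b hab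
  have hvB : v ∉ B := fun hv => lt_irrefl _ (hB v hv)
  by_cases hav : a = v
  · subst hav
    rw [List.cons_sublist_cons, List.sublist_append_iff] at hab
    obtain ⟨l₁, l₂, h12, h1, h2⟩ := hab
    cases l₁ with
    | nil =>
      simp only [List.nil_append] at h12
      subst h12
      cases h2 with
      | cons _ h2 => exact absurd (h2.subset (by simp)) hvA
      | cons_cons _ h2 => exact absurd (h2.subset (by simp)) hvA
    | cons c l₁ =>
      simp only [List.cons_append, List.cons.injEq] at h12
      exact h12.1 ▸ hB c (h1.subset (by simp))
  · by_cases hbv : b = v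
    · subst hbv
      exfalso
      have hab := hab.of_cons_of_ne hav
      rw [List.sublist_append_iff] at hab
      obtain ⟨l₁, l₂, h12, h1, h2⟩ := hab
      rcases l₁ with _ | ⟨c, _ | ⟨d, l₁⟩⟩
      · simp only [List.nil_append] at h12
        subst h12
        exact hvA ((h2.of_cons_of_ne hav).subset (by simp))
      · simp only [List.cons_append, List.nil_append, List.cons.injEq] at h12
        obtain ⟨rfl, rfl⟩ := h12
        have haB : a ∈ B := h1.subset (by simp)
        have haA : a ∈ A := by simpa using h2
        have hva := hB a haB
        cases A with
        | nil => simp at haA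
        | cons c A =>
          simp at hA
          have haA : a ∈ A := by
            rcases List.mem_cons.1 haA with rfl | haA
            · omega
            · exact haA
          have : a < c := h a c ((List.singleton_sublist.2 haB).append
            (by simpa using haA : [c, a].Sublist (c :: A)))
          omega
      · simp only [List.cons_append, List.cons.injEq] at h12
        obtain ⟨-, rfl, -⟩ := h12
        exact hvB (h1.subset (by simp))
    · have hf := hab.filter (fun x => decide (x ≠ v))
      have e1 : B.filter (fun x => decide (x ≠ v)) = B :=
        List.filter_eq_self.2 fun x hx => by simpa using (hB x hx).ne'
      have e2 : A.filter (fun x => decide (x ≠ v)) = A :=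
        List.filter_eq_self.2 fun x hx => by
          simpa using fun e : x = v => hvA (e ▸ hx)
      simp only [List.filter_cons, List.filter_append, e1, e2] at hf
      simp [hav, hbv] at hf
      exact h a b hf

lemma isStirling_doubling {l : List ℕ} (hl : l.Nodup) (hpos : ∀ x ∈ l, 0 < x) :
    IsStirling (doubling l) := by
  induction l with
  | nil => intro a b h; simp [doubling] at h
  | cons v t ih =>
    have hv : v ∉ doubling t := by
      rw [mem_doubling]; exact (List.nodup_cons.1 hl).1
    refine IsStirling.insert_pair ?_ (fun x => lt_of_mem_takeWhile)
      (headD_dropWhile_lt (hpos v List.mem_cons_self) hv)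
      fun h => hv ((List.dropWhile_suffix _).subset h)
    rw [List.takeWhile_append_dropWhile]
    exact ih (List.nodup_cons.1 hl).2 fun x hx => hpos x (List.mem_cons_of_mem _ hx)

lemma dropCount_doubling {l : List ℕ} (hl : l.Nodup) (hpos : ∀ x ∈ l, 0 < x) :
    dropCount (doubling l) = l.length := by
  induction l with
  | nil => rfl
  | cons v t ih =>
    have hv : v ∉ doubling t := by
      rw [mem_doubling]; exact (List.nodup_cons.1 hl).1
    rw [doubling, dropCount_insert_pair (fun x => lt_of_mem_takeWhile)
      (headD_dropWhile_lt (hpos v List.mem_cons_self) hv), List.takeWhile_append_dropWhile,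
      ih (List.nodup_cons.1 hl).2 fun x hx => hpos x (List.mem_cons_of_mem _ hx),
      List.length_cons]

lemma platCount_doubling {l : List ℕ} (hl : l.Nodup) (hpos : ∀ x ∈ l, 0 < x) :
    platCount (doubling l) + riseCount l = l.length := by
  induction l with
  | nil => rfl
  | cons v t ih =>
    have hv : v ∉ doubling t := by
      rw [mem_doubling]; exact (List.nodup_cons.1 hl).1
    have ih := ih (List.nodup_cons.1 hl).2 fun x hx => hpos x (List.mem_cons_of_mem _ hx)
    have hB : (doubling t).takeWhile (v < ·) = [] ↔ ¬ v < t.headD 0 := by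
      have hh := head?_doubling t
      cases hd : doubling t with
      | nil => simp [hd] at hh; simp [← hh, List.headD_eq_head?_getD]
      | cons a s => simp [hd] at hh; simp [← hh, List.takeWhile_cons, List.headD_eq_head?_getD]
    rw [doubling, platCount_insert_pair (fun x => lt_of_mem_takeWhile)
      (headD_dropWhile_lt (hpos v List.mem_cons_self) hv), List.takeWhile_append_dropWhile,
      riseCount, List.length_cons]
    simp only [hB]
    split_ifs <;> omega

lemma exists_doubling_eq {w : List ℕ} (hc : ∀ x ∈ w, w.count x = 2) (hs : IsStirling w)
    (hd : dropCount w = w.toFinset.card) : ∃ l, doubling l = w := by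
  induction hN : w.length using Nat.strong_induction_on generalizing w with
  | _ N ih =>
  cases w with
  | nil => exact ⟨[], rfl⟩
  | cons v u =>
    have hvc := hc v List.mem_cons_self
    rw [List.count_cons_self] at hvc
    have hvu : v ∈ u := List.count_pos_iff.1 (by omega)
    obtain ⟨B, A, rfl, hvB⟩ := List.eq_append_cons_of_mem hvu
    have hvA : v ∉ A := by
      rw [List.count_append, List.count_cons_self] at hvc
      exact List.count_eq_zero.1 (by omega)
    have hB : ∀ x ∈ B, v < x := by
      intro x hx
      refine hs v x (List.Sublist.cons_cons v ?_)
      exact (List.singleton_sublist.2 hx).append (by simp : [v].Sublist (v :: A))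
    have hAs : IsStirling A :=
      hs.sublist (((List.sublist_cons_self v A).trans (List.sublist_append_right B _)).cons v)
    have hA : A.headD 0 < v := by
      have h1 : dropCount (v :: A) = (v :: A).toFinset.card := by
        apply IsStirling.dropCount_eq_of_append (X := v :: B)
        · simpa using hs
        · simpa using hd
      rw [dropCount, List.toFinset_cons,
        Finset.card_insert_of_notMem (by simpa using hvA)] at h1
      have := hAs.dropCount_le
      split_ifs at h1 with h
      · exact h
      · omega
    have hsub : (B ++ A).Sublist (v :: (B ++ v :: A)) :=
      ((List.sublist_cons_self v A).append_left B).cons v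
    have hcard : (v :: (B ++ v :: A)).toFinset.card = (B ++ A).toFinset.card + 1 := by
      have : (v :: (B ++ v :: A)).toFinset = insert v (B ++ A).toFinset := by
        ext x; simp
      rw [this, Finset.card_insert_of_notMem (by simp [hvA, hvB])]
    obtain ⟨t, ht⟩ := ih (B ++ A).length (by simp at hN ⊢; omega) (w := B ++ A)
      (by
        intro x hx
        have hxv : v ≠ x := by
          rintro rfl
          simp [hvA, hvB] at hx
        have := hc x (hsub.subset hx)
        simpa [List.count_cons, List.count_append, hxv] using this)
      (hs.sublist hsub)
      (by
        rw [dropCount_insert_pair hB hA, hcard] at hd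
        omega) rfl
    refine ⟨v :: t, ?_⟩
    have h1 : B.takeWhile (fun x => decide (v < x)) = B :=
      List.takeWhile_eq_self_iff.2 fun x hx => by simpa using hB x hx
    have h2 : A.takeWhile (fun x => decide (v < x)) = [] := by
      cases A with
      | nil => rfl
      | cons a A => simp at hA; simp [hA.le]
    have h3 : A.dropWhile (fun x => decide (v < x)) = A := by
      have := List.takeWhile_append_dropWhile (p := fun x => decide (v < x)) (l := A)
      rwa [h2] at this
    have h4 : (B ++ A).takeWhile (fun x => decide (v < x)) = B := by
      rw [List.takeWhile_append_of_pos fun x hx => by simpa using hB x hx, h2, List.append_nil]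
    have h5 : (B ++ A).dropWhile (fun x => decide (v < x)) = A := by
      rw [List.dropWhile_append_of_pos fun x hx => by simpa using hB x hx, h3]
    rw [doubling, ht, h4, h5]

/-! ### Words as functions -/

lemma headD_revWord {f : ℕ → ℕ} (h0 : f 0 = 0) (m : ℕ) : (revWord f m).headD 0 = f m := by
  cases m <;> simp [revWord, h0]

lemma revWord_congr {f g : ℕ → ℕ} {m : ℕ} (h : ∀ i, 1 ≤ i → i ≤ m → f i = g i) :
    revWord f m = revWord g m := by
  induction m with
  | zero => rfl
  | succ m ih =>
    rw [revWord, revWord, h (m + 1) (by omega) le_rfl, ih fun i h1 h2 => h i h1 (by omega)]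

lemma eq_of_revWord_eq {f g : ℕ → ℕ} {m : ℕ} (h : revWord f m = revWord g m) {i : ℕ}
    (h1 : 1 ≤ i) (h2 : i ≤ m) : f i = g i := by
  induction m with
  | zero => omega
  | succ m ih =>
    simp only [revWord, List.cons.injEq] at h
    rcases h2.eq_or_lt with rfl | h2
    · exact h.1
    · exact ih h.2 (by omega)

lemma exists_revWord_eq (w : List ℕ) : ∃ f : ℕ → ℕ, revWord f w.length = w := by
  induction w with
  | nil => exact ⟨fun _ => 0, rfl⟩
  | cons a w ih =>
    obtain ⟨f, hf⟩ := ih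
    refine ⟨Function.update f (w.length + 1) a, ?_⟩
    rw [List.length_cons, revWord, Function.update_self]
    nth_rewrite 3 [← hf]
    congr 1
    exact revWord_congr fun i _ h2 => Function.update_of_ne (by omega) _ _

lemma mem_revWord {f : ℕ → ℕ} {m x : ℕ} :
    x ∈ revWord f m ↔ ∃ i, 1 ≤ i ∧ i ≤ m ∧ f i = x := by
  induction m with
  | zero => simp [revWord]
  | succ m ih =>
    rw [revWord, List.mem_cons, ih]
    constructor
    · rintro (rfl | ⟨i, h1, h2, rfl⟩)
      · exact ⟨m + 1, by omega, le_rfl, rfl⟩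
      · exact ⟨i, h1, by omega, rfl⟩
    · rintro ⟨i, h1, h2, rfl⟩
      rcases h2.eq_or_lt with rfl | h2
      · exact Or.inl rfl
      · exact Or.inr ⟨i, h1, by omega, rfl⟩

lemma pair_sublist_revWord {f : ℕ → ℕ} {m x y : ℕ} :
    [y, x].Sublist (revWord f m) ↔ ∃ i j, 1 ≤ i ∧ i < j ∧ j ≤ m ∧ f i = x ∧ f j = y := by
  induction m with
  | zero => simp [revWord]
  | succ m ih =>
    rw [revWord, List.cons_sublist_cons', ih, List.singleton_sublist, mem_revWord]
    constructor
    · rintro (⟨i, j, h1, h2, h3, h4⟩ | ⟨rfl, i, h1, h2, rfl⟩)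
      · exact ⟨i, j, h1, h2, by omega, h4⟩
      · exact ⟨i, m + 1, h1, by omega, le_rfl, rfl, rfl⟩
    · rintro ⟨i, j, h1, h2, h3, rfl, rfl⟩
      rcases h3.eq_or_lt with rfl | h3
      · exact Or.inr ⟨rfl, i, h1, by omega, rfl⟩
      · exact Or.inl ⟨i, j, h1, h2, by omega, rfl, rfl⟩

lemma triple_sublist_revWord {f : ℕ → ℕ} {m x y z : ℕ} :
    [z, y, x].Sublist (revWord f m) ↔
      ∃ i j k, 1 ≤ i ∧ i < j ∧ j < k ∧ k ≤ m ∧ f i = x ∧ f j = y ∧ f k = z := by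
  induction m with
  | zero => simp [revWord]
  | succ m ih =>
    rw [revWord, List.cons_sublist_cons', ih, pair_sublist_revWord]
    constructor
    · rintro (⟨i, j, k, h1, h2, h3, h4, h5⟩ | ⟨rfl, i, j, h1, h2, h3, h4, h5⟩)
      · exact ⟨i, j, k, h1, h2, h3, by omega, h5⟩
      · exact ⟨i, j, m + 1, h1, h2, by omega, le_rfl, h4, h5, rfl⟩
    · rintro ⟨i, j, k, h1, h2, h3, h4, rfl, rfl, rfl⟩
      rcases h4.eq_or_lt with rfl | h4
      · exact Or.inr ⟨rfl, i, j, h1, h2, by omega, rfl, rfl⟩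
      · exact Or.inl ⟨i, j, k, h1, h2, h3, by omega, rfl, rfl, rfl⟩

lemma isStirling_revWord {f : ℕ → ℕ} {m : ℕ} :
    IsStirling (revWord f m) ↔
      ∀ i j k, 1 ≤ i → i < j → j < k → k ≤ m → f i = f k → f i < f j := by
  constructor
  · intro h i j k h1 h2 h3 h4 he
    exact h _ _ (triple_sublist_revWord.2 ⟨i, j, k, h1, h2, h3, h4, rfl, rfl, he.symm⟩)
  · intro h a b hab
    obtain ⟨i, j, k, h1, h2, h3, h4, rfl, rfl, he⟩ := triple_sublist_revWord.1 hab
    exact h i j k h1 h2 h3 h4 he.symm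

lemma count_revWord (f : ℕ → ℕ) (m x : ℕ) :
    (revWord f m).count x = ((Icc 1 m).filter fun i => f i = x).card := by
  simp only [Finset.card_filter]
  induction m with
  | zero => simp [revWord]
  | succ m ih =>
    rw [revWord, List.count_cons, ih, Finset.sum_Icc_succ_top (by omega)]
    simp

lemma dropCount_revWord {f : ℕ → ℕ} (h0 : f 0 = 0) (m : ℕ) :
    dropCount (revWord f m) = ((Icc 1 m).filter fun i => f (i - 1) < f i).card := by
  simp only [Finset.card_filter]
  induction m with
  | zero => simp [revWord, dropCount]
  | succ m ih =>
    rw [revWord, dropCount, headD_revWord h0, ih, Finset.sum_Icc_succ_top (by omega), add_comm]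
    simp

lemma platCount_revWord (f : ℕ → ℕ) (m : ℕ) :
    platCount (revWord f m) = ((Icc 1 (m - 1)).filter fun i => f i = f (i + 1)).card := by
  simp only [Finset.card_filter]
  induction m with
  | zero => simp [revWord, platCount]
  | succ m ih =>
    rw [revWord, platCount, ih]
    cases m with
    | zero => simp [revWord]
    | succ m =>
      rw [Nat.add_sub_cancel, Nat.add_sub_cancel, Finset.sum_Icc_succ_top (by omega), add_comm]
      simp [revWord]

lemma riseCount_revWord {f : ℕ → ℕ} (h0 : f 0 = 0) (m : ℕ) :
    riseCount (revWord f m) = ((Icc 1 (m - 1)).filter fun i => f (i + 1) < f i).card := by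
  simp only [Finset.card_filter]
  induction m with
  | zero => simp [revWord, riseCount]
  | succ m ih =>
    rw [revWord, riseCount, ih, headD_revWord h0]
    cases m with
    | zero => simp [h0]
    | succ m =>
      rw [Nat.add_sub_cancel, Nat.add_sub_cancel, Finset.sum_Icc_succ_top (by omega), add_comm]

/-! ### Stirling permutations and permutations as lists -/

/-- The right-to-left word of a Stirling permutation of order `n`. -/
def IsStirlingWord (n : ℕ) (w : List ℕ) : Prop :=
  w.Perm (List.range' 1 n ++ List.range' 1 n) ∧ IsStirling w

lemma count_range'_one (n x : ℕ) :
    (List.range' 1 n).count x = if 1 ≤ x ∧ x ≤ n then 1 else 0 := by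
  rw [(List.nodup_range' (step := 1)).count]
  congr 1
  rw [List.mem_range'_1]
  apply propext
  omega

lemma perm_range'_iff {n : ℕ} {l : List ℕ} :
    l.Perm (List.range' 1 n) ↔ ∀ x, l.count x = if 1 ≤ x ∧ x ≤ n then 1 else 0 := by
  simp only [List.perm_iff_count, count_range'_one]

lemma perm_double_range'_iff {n : ℕ} {w : List ℕ} :
    w.Perm (List.range' 1 n ++ List.range' 1 n) ↔
      ∀ x, w.count x = if 1 ≤ x ∧ x ≤ n then 2 else 0 := by
  simp only [List.perm_iff_count, List.count_append, count_range'_one]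
  refine forall_congr' fun x => ?_
  split_ifs <;> rfl

lemma sval_zero {n : ℕ} (σ : Fin (2*n) → Fin (n+1)) : sval σ 0 = 0 := by
  simp [sval]

lemma sval_succ {n : ℕ} (σ : Fin (2*n) → Fin (n+1)) (i : Fin (2*n)) :
    sval σ (i + 1) = σ i := by
  rw [sval, dif_pos (by omega)]
  simp

lemma pval_zero {n : ℕ} (π : Equiv.Perm (Fin n)) : pval π 0 = 0 := by
  simp [pval]

lemma pval_succ {n : ℕ} (π : Equiv.Perm (Fin n)) (i : Fin n) :
    pval π (i + 1) = π i + 1 := by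
  rw [pval, dif_pos (by omega)]
  simp

lemma card_filter_Icc_eq_card_filter_fin (m : ℕ) (p : ℕ → Prop) [DecidablePred p] :
    ((Icc 1 m).filter p).card = (Finset.univ.filter fun i : Fin m => p (i + 1)).card := by
  symm
  refine Finset.card_bij (fun i _ => (i : ℕ) + 1) ?_ ?_ ?_
  · intro i hi
    simp only [Finset.mem_filter, Finset.mem_univ, true_and, Finset.mem_Icc] at hi ⊢
    exact ⟨by omega, hi⟩
  · intro i _ j _ h
    exact Fin.ext (by omega)
  · intro j hj
    simp only [Finset.mem_filter, Finset.mem_Icc] at hj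
    refine ⟨⟨j - 1, by omega⟩, ?_, ?_⟩
    · have : j - 1 + 1 = j := by omega
      simpa [this] using hj.2
    · simp; omega

lemma count_revWord_sval {n : ℕ} (σ : Fin (2*n) → Fin (n+1)) (x : ℕ) :
    (revWord (sval σ) (2*n)).count x = (Finset.univ.filter fun i => (σ i : ℕ) = x).card := by
  rw [count_revWord, card_filter_Icc_eq_card_filter_fin]
  simp only [sval_succ]

lemma isStirling_revWord_sval {n : ℕ} (σ : Fin (2*n) → Fin (n+1)) :
    IsStirling (revWord (sval σ) (2*n)) ↔
      ∀ i j k : Fin (2*n), i < j → j < k → σ i = σ k → σ i < σ j := by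
  rw [isStirling_revWord]
  constructor
  · intro h i j k hij hjk he
    have := h (i + 1) (j + 1) (k + 1) (by omega) (by simpa using hij) (by simpa using hjk)
      (by omega) (by simp only [sval_succ, he])
    simpa only [sval_succ, Fin.val_fin_lt] using this
  · intro h i j k h1 hij hjk hk he
    obtain ⟨i, rfl⟩ : ∃ i' : Fin (2*n), i = i' + 1 := ⟨⟨i - 1, by omega⟩, by simp; omega⟩
    obtain ⟨j, rfl⟩ : ∃ j' : Fin (2*n), j = j' + 1 := ⟨⟨j - 1, by omega⟩, by simp; omega⟩
    obtain ⟨k, rfl⟩ : ∃ k' : Fin (2*n), k = k' + 1 := ⟨⟨k - 1, by omega⟩, by simp; omega⟩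
    simp only [sval_succ] at he ⊢
    exact h i j k (Fin.lt_def.2 (by omega)) (Fin.lt_def.2 (by omega)) (Fin.ext he)

lemma mem_StirlingSet_iff {n : ℕ} (σ : Fin (2*n) → Fin (n+1)) :
    σ ∈ StirlingSet n ↔ IsStirlingWord n (revWord (sval σ) (2*n)) := by
  rw [StirlingSet, IsStirlingWord, isStirling_revWord_sval, Finset.mem_filter,
    perm_double_range'_iff]
  simp only [Finset.mem_univ, true_and, count_revWord_sval]
  refine and_congr_left fun _ => ?_
  constructor
  · intro h x
    split_ifs with hx
    · simpa only [Fin.ext_iff] using h ⟨x, by omega⟩ (by simp; omega)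
    · rw [Finset.card_eq_zero, Finset.filter_eq_empty_iff]
      rintro i -
      by_cases hxn : n < x
      · have := (σ i).isLt
        omega
      obtain rfl : x = 0 := by omega
      have hcard := Finset.card_eq_sum_card_fiberwise (s := Finset.univ)
        (t := (Finset.univ : Finset (Fin (n+1)))) (f := σ) (by simp)
      rw [Fin.sum_univ_succ, Finset.sum_congr rfl fun v _ => h v.succ (by simp)] at hcard
      simp only [Finset.card_univ, Fintype.card_fin, Finset.sum_const, smul_eq_mul] at hcard
      have h0 : (Finset.univ.filter fun i => σ i = 0).card = 0 := by omega
      rw [Finset.card_eq_zero, Finset.filter_eq_empty_iff] at h0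
      exact fun e => h0 (Finset.mem_univ i) (Fin.ext e)
  · intro h v hv
    have := h v
    rw [if_pos (by omega)] at this
    simpa only [Fin.ext_iff] using this

lemma revWord_sval_injective (n : ℕ) :
    Function.Injective fun σ : Fin (2*n) → Fin (n+1) => revWord (sval σ) (2*n) := by
  intro σ τ h
  funext i
  have := eq_of_revWord_eq h (i := i + 1) (by omega) (by omega)
  simpa only [sval_succ, ← Fin.ext_iff] using this

lemma exists_revWord_sval_eq {n : ℕ} {w : List ℕ} (hw : IsStirlingWord n w) :
    ∃ σ : Fin (2*n) → Fin (n+1), revWord (sval σ) (2*n) = w := by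
  obtain ⟨f, hf⟩ := exists_revWord_eq w
  have hlen : w.length = 2 * n := by rw [hw.1.length_eq]; simp; omega
  rw [hlen] at hf
  have hle : ∀ i, 1 ≤ i → i ≤ 2 * n → f i < n + 1 := by
    intro i h1 h2
    have : f i ∈ w := hf ▸ mem_revWord.2 ⟨i, h1, h2, rfl⟩
    have := hw.1.subset this
    simp at this
    omega
  refine ⟨fun i => ⟨f (i + 1), hle _ (by omega) (by omega)⟩, ?_⟩
  rw [← hf]
  refine revWord_congr fun i h1 h2 => ?_
  rw [sval, dif_pos ⟨h1, h2⟩]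
  simp [Nat.sub_add_cancel h1]

lemma revWord_pval_perm {n : ℕ} (π : Equiv.Perm (Fin n)) :
    (revWord (pval π) n).Perm (List.range' 1 n) := by
  rw [perm_range'_iff]
  intro x
  rw [count_revWord, card_filter_Icc_eq_card_filter_fin]
  simp only [pval_succ]
  split_ifs with hx
  · rw [Finset.card_eq_one]
    refine ⟨π.symm ⟨x - 1, by omega⟩, ?_⟩
    ext i
    simp only [Finset.mem_filter, Finset.mem_univ, true_and, Finset.mem_singleton,
      Equiv.eq_symm_apply, Fin.ext_iff]
    omega
  · rw [Finset.card_eq_zero, Finset.filter_eq_empty_iff]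
    rintro i -
    have := (π i).isLt
    omega

lemma revWord_pval_injective (n : ℕ) :
    Function.Injective fun π : Equiv.Perm (Fin n) => revWord (pval π) n := by
  intro π τ h
  ext i
  have := eq_of_revWord_eq h (i := i + 1) (by omega) (by omega)
  simpa only [pval_succ, Nat.add_right_cancel_iff] using this

lemma exists_revWord_pval_eq {n : ℕ} {l : List ℕ} (hl : l.Perm (List.range' 1 n)) :
    ∃ π : Equiv.Perm (Fin n), revWord (pval π) n = l := by
  obtain ⟨f, hf⟩ := exists_revWord_eq l
  have hlen : l.length = n := by rw [hl.length_eq]; simp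
  rw [hlen] at hf
  have hle : ∀ i, 1 ≤ i → i ≤ n → 1 ≤ f i ∧ f i ≤ n := by
    intro i h1 h2
    have : f i ∈ l := hf ▸ mem_revWord.2 ⟨i, h1, h2, rfl⟩
    have := hl.subset this
    simp at this
    omega
  have hsurj : Function.Surjective fun i : Fin n =>
      (⟨f (i + 1) - 1, by have := hle (i + 1) (by omega) (by omega); omega⟩ : Fin n) := by
    intro v
    have hv : (v : ℕ) + 1 ∈ revWord f n := by
      rw [hf, hl.mem_iff]
      simp
      omega
    obtain ⟨i, h1, h2, h3⟩ := mem_revWord.1 hv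
    refine ⟨⟨i - 1, by omega⟩, Fin.ext ?_⟩
    simp [Nat.sub_add_cancel h1, h3]
  refine ⟨Equiv.ofBijective _ (Finite.injective_iff_bijective.1
    (Finite.injective_iff_surjective.2 hsurj)), ?_⟩
  rw [← hf]
  refine revWord_congr fun i h1 h2 => ?_
  rw [pval, dif_pos ⟨h1, h2⟩]
  simp [Nat.sub_add_cancel h1, Nat.sub_add_cancel (hle i h1 h2).1]

lemma pdes_eq_riseCount {n : ℕ} (π : Equiv.Perm (Fin n)) :
    pdes π = riseCount (revWord (pval π) n) := by
  rw [riseCount_revWord (pval_zero π), pdes]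

/-! ### Statistics of Stirling permutations -/

section Statistics

variable {n : ℕ} {σ : Fin (2*n) → Fin (n+1)}

lemma sval_mem (h : σ ∈ StirlingSet n) {i : ℕ} (h1 : 1 ≤ i) (h2 : i ≤ 2*n) :
    1 ≤ sval σ i ∧ sval σ i ≤ n := by
  have := ((mem_StirlingSet_iff σ).1 h).1.subset (mem_revWord.2 ⟨i, h1, h2, rfl⟩)
  simp at this
  omega

lemma sval_lt (h : σ ∈ StirlingSet n) {i j k : ℕ} (h1 : 1 ≤ i) (h2 : i < j) (h3 : j < k)
    (h4 : k ≤ 2*n) (he : sval σ i = sval σ k) : sval σ i < sval σ j :=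
  isStirling_revWord.1 ((mem_StirlingSet_iff σ).1 h).2 i j k h1 h2 h3 h4 he

lemma exists_ne_sval_eq (h : σ ∈ StirlingSet n) {i : ℕ} (h1 : 1 ≤ i) (h2 : i ≤ 2*n) :
    ∃ j, j ≠ i ∧ 1 ≤ j ∧ j ≤ 2*n ∧ sval σ j = sval σ i := by
  have hc := perm_double_range'_iff.1 ((mem_StirlingSet_iff σ).1 h).1 (sval σ i)
  rw [if_pos (sval_mem h h1 h2), count_revWord] at hc
  obtain ⟨j, hj, hne⟩ := Finset.exists_mem_ne (by omega) i (s :=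
    (Icc 1 (2*n)).filter fun j => sval σ j = sval σ i)
  simp only [Finset.mem_filter, Finset.mem_Icc] at hj
  exact ⟨j, hne, hj.1.1, hj.1.2, hj.2⟩

lemma lapQ_add_dascQ (h : σ ∈ StirlingSet n) :
    lapQ σ + dascQ σ = dropCount (revWord (sval σ) (2*n)) := by
  rw [dropCount_revWord (sval_zero σ), lapQ, dascQ, ← Finset.card_union_of_disjoint]
  · congr 1
    ext i
    simp only [Finset.mem_union, Finset.mem_filter, Finset.mem_Icc]
    constructor
    · rintro (⟨hi, h1, -⟩ | ⟨hi, h1, -⟩) <;> exact ⟨by omega, h1⟩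
    · rintro ⟨hi, h1⟩
      obtain ⟨j, hne, hj1, hj2, hj⟩ := exists_ne_sval_eq h hi.1 hi.2
      rcases lt_or_gt_of_ne hne with hlt | hlt
      · exfalso
        have : j ≠ i - 1 := by rintro rfl; omega
        have := sval_lt h hj1 (j := i - 1) (k := i) (by omega) (by omega) hi.2 hj
        omega
      · have hle : sval σ i ≤ sval σ (i + 1) := by
          rcases (show i + 1 ≤ j from hlt).eq_or_lt with rfl | hlt'
          · exact hj.ge
          · exact (sval_lt h hi.1 (by omega) hlt' hj2 hj.symm).le
        rcases hle.eq_or_lt with he | hl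
        · exact Or.inl ⟨by omega, h1, he⟩
        · exact Or.inr ⟨by omega, h1, hl⟩
  · rw [Finset.disjoint_left]
    intro i h1 h2
    simp only [Finset.mem_filter] at h1 h2
    omega

lemma lapQ_add_dpQ (h : σ ∈ StirlingSet n) :
    lapQ σ + dpQ σ = platCount (revWord (sval σ) (2*n)) := by
  rw [platCount_revWord, lapQ, dpQ, ← Finset.card_union_of_disjoint]
  · congr 1
    ext i
    simp only [Finset.mem_union, Finset.mem_filter, Finset.mem_Icc]
    constructor
    · rintro (⟨hi, -, h1⟩ | ⟨hi, -, h1⟩) <;> exact ⟨by omega, h1⟩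
    · rintro ⟨hi, h1⟩
      by_cases hi1 : i = 1
      · subst hi1
        exact Or.inl ⟨hi, by
          rw [Nat.sub_self, sval_zero]; exact (sval_mem h le_rfl (by omega)).1, h1⟩
      · rcases lt_trichotomy (sval σ (i - 1)) (sval σ i) with hlt | he | hgt
        · exact Or.inl ⟨hi, hlt, h1⟩
        · have := sval_lt h (i := i - 1) (j := i) (k := i + 1) (by omega) (by omega)
            (by omega) (by omega) (he.trans h1)
          omega
        · exact Or.inr ⟨by omega, hgt, h1⟩
  · rw [Finset.disjoint_left]
    intro i h1 h2
    simp only [Finset.mem_filter] at h1 h2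
    omega

lemma dropCount_add_dpQ_le (h : σ ∈ StirlingSet n) :
    dropCount (revWord (sval σ) (2*n)) + dpQ σ ≤ n := by
  rw [dropCount_revWord (sval_zero σ), dpQ, ← Finset.card_union_of_disjoint]
  · have hsub : ∀ i ∈ (Icc 1 (2*n)).filter (fun i => sval σ (i-1) < sval σ i) ∪
        (Icc 2 (2*n - 1)).filter
          (fun i => sval σ i < sval σ (i-1) ∧ sval σ i = sval σ (i+1)),
        1 ≤ i ∧ i ≤ 2*n ∧ (sval σ (i-1) < sval σ i ∨
          i + 1 ≤ 2*n ∧ sval σ i < sval σ (i-1) ∧ sval σ i = sval σ (i+1)) := by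
      intro i hi
      simp only [Finset.mem_union, Finset.mem_filter, Finset.mem_Icc] at hi
      omega
    have hlt : ∀ i j, 1 ≤ i → i < j → j ≤ 2*n → sval σ i = sval σ j →
        ¬ (sval σ (j-1) < sval σ j ∨
          j + 1 ≤ 2*n ∧ sval σ j < sval σ (j-1) ∧ sval σ j = sval σ (j+1)) := by
      rintro i j h1 hij hj he (hj' | ⟨h2, -, h3⟩)
      · have : i ≠ j - 1 := by rintro rfl; omega
        have := sval_lt h h1 (j := j - 1) (k := j) (by omega) (by omega) hj he
        omega
      · have := sval_lt h h1 hij (Nat.lt_succ_self j) h2 (he.trans h3)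
        omega
    refine (Finset.card_le_card_of_injOn (sval σ) (t := Icc 1 n) ?_ ?_).trans (by simp)
    · intro i hi
      obtain ⟨h1, h2, -⟩ := hsub i hi
      simpa using sval_mem h h1 h2
    · intro i hi j hj he
      obtain ⟨hi1, hi2, hi3⟩ := hsub i hi
      obtain ⟨hj1, hj2, hj3⟩ := hsub j hj
      rcases lt_trichotomy i j with hij | hij | hij
      · exact absurd hj3 (hlt i j hi1 hij hj2 he)
      · exact hij
      · exact absurd hi3 (hlt j i hj1 hij hi2 he.symm)
  · rw [Finset.disjoint_left]
    intro i h1 h2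
    simp only [Finset.mem_filter] at h1 h2
    omega

lemma statistics_iff (h : σ ∈ StirlingSet n) {k : ℕ} (hk : k ≤ n) :
    (lapQ σ = n - k ∧ dascQ σ = k ∧ dpQ σ = 0) ↔
      dropCount (revWord (sval σ) (2*n)) = n ∧
        platCount (revWord (sval σ) (2*n)) = n - k := by
  have h1 := lapQ_add_dascQ h
  have h2 := lapQ_add_dpQ h
  have h3 := dropCount_add_dpQ_le h
  omega

end Statistics

lemma isStirlingWord_doubling {n : ℕ} {l : List ℕ} (hl : l.Perm (List.range' 1 n)) :
    IsStirlingWord n (doubling l) ∧ dropCount (doubling l) = n ∧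
      platCount (doubling l) + riseCount l = n := by
  have hnd : l.Nodup := hl.nodup_iff.2 List.nodup_range'
  have hpos : ∀ x ∈ l, 0 < x := fun x hx => by
    have := hl.subset hx
    simp at this
    omega
  have hlen : l.length = n := by simpa using hl.length_eq
  refine ⟨⟨(doubling_perm l).trans (hl.append hl), isStirling_doubling hnd hpos⟩, ?_, ?_⟩
  · rw [dropCount_doubling hnd hpos, hlen]
  · rw [platCount_doubling hnd hpos, hlen]

lemma exists_perm_doubling_eq {n : ℕ} {w : List ℕ} (hw : IsStirlingWord n w)
    (hd : dropCount w = n) : ∃ l, l.Perm (List.range' 1 n) ∧ doubling l = w := by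
  have hc := perm_double_range'_iff.1 hw.1
  have hcard : w.toFinset.card = n := by
    have : w.toFinset = Icc 1 n := by
      ext x
      rw [List.mem_toFinset, ← List.count_pos_iff, hc, Finset.mem_Icc]
      split_ifs <;> simp_all
    simp [this]
  obtain ⟨l, rfl⟩ := exists_doubling_eq (w := w) (fun x hx => by
    have := List.count_pos_iff.2 hx
    rw [hc] at this ⊢
    split_ifs at this ⊢ <;> simp_all) hw.2 (hd.trans hcard.symm)
  refine ⟨l, perm_range'_iff.2 fun x => ?_, rfl⟩
  have h1 := hc x
  rw [(doubling_perm l).count_eq, List.count_append] at h1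
  split_ifs at h1 ⊢ <;> omega

theorem statement_19 (n k : ℕ) (hn : 1 ≤ n) (hk : k ≤ n - 1) :
    gammaNum n (n - k) k = eulerianNum n k := by
  have hπ : ∀ π : Equiv.Perm (Fin n), ∃ σ : Fin (2*n) → Fin (n+1),
      revWord (sval σ) (2*n) = doubling (revWord (pval π) n) := fun π =>
    exists_revWord_sval_eq (isStirlingWord_doubling (revWord_pval_perm π)).1
  choose F hF using hπ
  symm
  refine Finset.card_bij (fun π _ => F π) ?_ ?_ ?_
  · intro π h
    have hdes : pdes π = k := by simpa using h
    obtain ⟨hw, hd, hp⟩ := isStirlingWord_doubling (revWord_pval_perm π)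
    rw [← hF] at hw hd hp
    have hmem := (mem_StirlingSet_iff (F π)).2 hw
    rw [Finset.mem_filter, statistics_iff hmem (by omega)]
    rw [← pdes_eq_riseCount] at hp
    exact ⟨hmem, hd, by omega⟩
  · intro π _ τ _ h
    refine revWord_pval_injective n (doubling_injective ?_)
    rw [← hF, ← hF, h]
  · intro σ h
    obtain ⟨hmem, hstat⟩ := Finset.mem_filter.1 h
    rw [statistics_iff hmem (by omega)] at hstat
    obtain ⟨l, hl, hlw⟩ := exists_perm_doubling_eq ((mem_StirlingSet_iff σ).1 hmem) hstat.1
    obtain ⟨π, rfl⟩ := exists_revWord_pval_eq hl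
    refine ⟨π, ?_, revWord_sval_injective n ((hF π).trans hlw)⟩
    have hp := (isStirlingWord_doubling hl).2.2
    rw [hlw, hstat.2, ← pdes_eq_riseCount] at hp
    simp
    omega
end
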